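/- arXiv:2201.05378 — 2 statements merged into one kernel-verified Lean document; each statement's English description precedes it below -/
import Mathlib

section
/- Let n be a positive odd integer and d a positive integer with gcd(n,d)=1. Let r be an integer with n−dn+d ≤ r ≤ n and n ≡ r (mod d). Then, modulo Φ_n(−q)^3 Φ_n(q)^2, one has Σ_{k=0}^{(n−r)/d} (−1)^k · (1+q^{2dk+r})(q^{2r};q^{2d})_k^3 / ((1+q^r)(q^{2d};q^{2d})_k^3) · q^{dk^2+2k(d−r)} ≡ (−1)^{(n−r)/d} · ([n]_{q^2}/[r]_{q^2}) · q^{(n−r)(n+r−d)/d} · Σ_{k=0}^{(n−r)/d} (q^{2r};q^{2d})_k^2 (q^d;q^{2d})_k / ((q^{2d}, q^{d+r}, q^{2d+r}; q^{2d})_k) · q^{2k(d−r)}. -/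
open Finset Polynomial


/-- The q-shifted factorial `(x; q)_k = ∏_{j=0}^{k-1} (1 - x q^j)`. -/
noncomputable def qPoch (x q : RatFunc ℚ) (k : ℕ) : RatFunc ℚ :=
  ∏ j ∈ Finset.range k, (1 - x * q ^ j)

/-- The q-integer `[m]_q = (1 - q^m)/(1 - q)` (with integer `m`). -/
noncomputable def qInt (q : RatFunc ℚ) (m : ℤ) : RatFunc ℚ :=
  (1 - q ^ m) / (1 - q)


/-- generic q-shifted factorial -/
def Po {T : Type*} [CommRing T] (x q : T) (k : ℕ) : T := ∏ j ∈ range k, (1 - x * q ^ j)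

lemma Po_zero {T : Type*} [CommRing T] (x q : T) : Po x q 0 = 1 := by simp [Po]

lemma Po_succ {T : Type*} [CommRing T] (x q : T) (k : ℕ) :
    Po x q (k + 1) = Po x q k * (1 - x * q ^ k) := by simp [Po, prod_range_succ]

lemma Po_succ' {T : Type*} [CommRing T] (x q : T) (k : ℕ) :
    Po x q (k + 1) = (1 - x) * Po (x * q) q k := by
  simp only [Po, prod_range_succ']
  rw [mul_comm]
  congr 1
  · simp
  · refine prod_congr rfl fun j _ => ?_
    ring

lemma Po_add {T : Type*} [CommRing T] (x q : T) (k l : ℕ) :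
    Po x q (k + l) = Po x q k * Po (x * q ^ k) q l := by
  simp only [Po, prod_range_add]
  congr 1
  refine prod_congr rfl fun j _ => ?_
  ring

/-- Gaussian binomials -/
def GB {T : Type*} [CommRing T] (q : T) : ℕ → ℕ → T
  | _, 0 => 1
  | 0, _ + 1 => 0
  | M + 1, j + 1 => q ^ (j + 1) * GB q M (j + 1) + GB q M j

lemma GB_gt {T : Type*} [CommRing T] (q : T) : ∀ M j : ℕ, M < j → GB q M j = 0
  | 0, j + 1, _ => by simp [GB]
  | M + 1, j + 1, h => by
    rw [GB, GB_gt q M (j + 1) (by omega), GB_gt q M j (by omega)]; simp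

lemma GB_Po {T : Type*} [CommRing T] (q : T) : ∀ j l : ℕ,
    GB q (j + l) j * (Po q q j * Po q q l) = Po q q (j + l)
  | 0, l => by simp [GB, Po_zero]
  | j + 1, 0 => by
    have h1 := GB_Po q j 0
    have h2 := GB_gt q j (j + 1) (by omega)
    simp only [add_zero, GB, h2, Po_zero, Po_succ] at *
    linear_combination (1 - q * q ^ j) * h1
  | j + 1, l + 1 => by
    have h1 := GB_Po q j (l + 1)
    have h2 := GB_Po q (j + 1) l
    have e1 : j + 1 + (l + 1) = (j + l + 1) + 1 := by ring
    have e2 : j + 1 + l = j + l + 1 := by ring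
    have e3 : j + (l + 1) = j + l + 1 := by ring
    rw [e1, GB]
    rw [e2] at h2
    rw [e3] at h1
    rw [Po_succ q q l] at *
    rw [Po_succ q q j] at *
    rw [Po_succ q q (j + l + 1)]
    linear_combination q ^ (j + 1) * (1 - q * q ^ l) * h2 + (1 - q * q ^ j) * h1

/-- q-Chu–Vandermonde -/
lemma qCV {T : Type*} [CommRing T] (q b : T) : ∀ (M : ℕ) (u : T),
    ∑ j ∈ range (M + 1), GB q M j * ((-1) ^ j * q ^ (j.choose 2) * u ^ j * Po b q j *
      Po (b * u * q ^ j) q (M - j)) = Po u q M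
  | 0, u => by simp [GB, Po_zero]
  | M + 1, u => by
    rw [Po_succ', ← qCV q b M (u * q)]
    set X : ℕ → T := fun j => (-1) ^ j * q ^ (j.choose 2) * u ^ j * Po b q j *
      Po (b * u * q ^ j) q (M + 1 - j) with hX
    have key : ∑ j ∈ range (M + 1 + 1), GB q (M + 1) j * X j
        = ∑ j ∈ range (M + 1), GB q M j * (q ^ j * X j + X (j + 1)) := by
      rw [sum_range_succ']
      simp only [GB, add_mul, mul_add, sum_add_distrib]
      have := sum_range_succ' (fun j => q ^ j * GB q M j * X j) (M + 1)
      rw [sum_range_succ, GB_gt q M (M + 1) (by omega)] at this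
      simp only [mul_zero, zero_mul, add_zero, pow_zero, one_mul] at this
      have e : ∑ j ∈ range (M + 1), GB q M j * (q ^ j * X j) =
          ∑ j ∈ range (M + 1), q ^ j * GB q M j * X j :=
        sum_congr rfl fun j _ => by ring
      rw [e, this]
      cases M <;> simp [GB] <;> ring
    rw [key, mul_sum]
    refine sum_congr rfl fun j hj => ?_
    have hj' : j ≤ M := by simpa [Nat.lt_succ_iff] using hj
    have e1 : M + 1 - j = (M - j) + 1 := by omega
    have e2 : M + 1 - (j + 1) = M - j := by omega
    simp only [hX, e1, e2]
    rw [Po_succ', Po_succ, Nat.choose_succ_succ' j 1, Nat.choose_one_right]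
    have e3 : b * u * q ^ j * q = b * u * q ^ (j + 1) := by ring
    have e4 : b * (u * q) * q ^ j = b * u * q ^ (j + 1) := by ring
    rw [e3, e4]
    ring

section fieldlemmas
variable {K : Type*} [Field K]

lemma Po_ne {x q : K} (h : ∀ j : ℕ, x * q ^ j ≠ 1) (k : ℕ) : Po x q k ≠ 0 := by
  rw [Po, prod_ne_zero_iff]
  intro j _ h'
  exact h j (sub_eq_zero.mp h').symm

/-- summand of the terminating sum -/
def f6 (p s : K) (m k : ℕ) : K :=
  (-1) ^ k * p ^ (k ^ 2) * (1 + s * p ^ (2 * k)) * Po (s ^ 2) (p ^ 2) k * Po (p ^ 2) (p ^ 2) m *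
    Po (s * p) p (2 * m) / ((1 + s) * Po (p ^ 2) (p ^ 2) k * Po (p ^ 2) (p ^ 2) (m - k) *
      Po (s ^ 2 * p ^ 2) (p ^ 2) (m + k) * Po p (p ^ 2) m)

/-- WZ mate -/
def g6 (p s : K) (m k : ℕ) : K :=
  - ((-1) ^ k * p ^ (k ^ 2) * (1 - p ^ (2 * k)) * Po (s ^ 2) (p ^ 2) k * Po (p ^ 2) (p ^ 2) m *
    Po (s * p) p (2 * m) * p ^ (2 * m + 1) * (p - s * p ^ (2 * k))) /
    (p ^ (2 * k) * (1 + s) * Po (p ^ 2) (p ^ 2) k * Po (p ^ 2) (p ^ 2) (m + 1 - k) *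
      Po (s ^ 2 * p ^ 2) (p ^ 2) (m + k) * Po p (p ^ 2) (m + 1))

lemma sum6 {p s : K} (hp : p ≠ 0) (h1 : ∀ i : ℕ, p ^ (i + 1) ≠ 1)
    (h2 : ∀ i : ℕ, s ^ 2 * p ^ (2 * i) ≠ 1) (m : ℕ) :
    ∑ k ∈ range (m + 1), f6 p s m k = 1 := by
  have hs : 1 + s ≠ 0 := by
    intro h
    apply h2 0
    have : s = -1 := by linear_combination h
    rw [this]; simp
  have a1 : ∀ k, Po (p ^ 2) (p ^ 2) k ≠ 0 := fun k => Po_ne (fun j => by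
    have := h1 (2 * j + 1)
    convert this using 1; ring) k
  have a2 : ∀ k, Po (s ^ 2 * p ^ 2) (p ^ 2) k ≠ 0 := fun k => Po_ne (fun j => by
    have := h2 (j + 1)
    convert this using 1; ring) k
  have a3 : ∀ k, Po p (p ^ 2) k ≠ 0 := fun k => Po_ne (fun j => by
    have := h1 (2 * j)
    convert this using 1; ring) k
  induction m with
  | zero => simp [f6, Po_zero, hs]
  | succ m ih =>
    have tel : ∀ k ∈ range (m + 1), f6 p s (m + 1) k =
        f6 p s m k + (g6 p s m (k + 1) - g6 p s m k) := by
      intro k hk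
      obtain ⟨l, rfl⟩ := Nat.exists_eq_add_of_le (Nat.lt_succ_iff.mp (mem_range.mp hk))
      have b1 := a1 (k + 1)
      have b2 := a1 (l + 1)
      have b3 := a2 (k + l + k + 1)
      have b4 := a3 (k + l + 1)
      simp only [f6, g6]
      have e1 : k + l + 1 - k = l + 1 := by omega
      have e2 : k + l - k = l := by omega
      have e3 : k + l + 1 - (k + 1) = l := by omega
      have e4 : k + l + 1 + k = k + l + k + 1 := by omega
      have e5 : k + l + (k + 1) = k + l + k + 1 := by omega
      have e6 : 2 * (k + l + 1) = 2 * (k + l) + 1 + 1 := by omega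
      rw [e1, e2, e3, e4, e5, e6]
      simp only [Po_succ] at *
      have c1 := left_ne_zero_of_mul b1
      have c1' := right_ne_zero_of_mul b1
      have c2 := left_ne_zero_of_mul b2
      have c2' := right_ne_zero_of_mul b2
      have c3 := left_ne_zero_of_mul b3
      have c3' := right_ne_zero_of_mul b3
      have c4 := left_ne_zero_of_mul b4
      have c4' := right_ne_zero_of_mul b4
      have c5 := a1 (k + l)
      field_simp
      ring
    rw [sum_range_succ, sum_congr rfl tel, sum_add_distrib, ih, sum_range_sub]
    have z0 : g6 p s m 0 = 0 := by simp [g6]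
    have zl : g6 p s m (m + 1) + f6 p s (m + 1) (m + 1) = 0 := by
      have b1 := a1 (m + 1)
      have b3 := a2 (m + 1 + m + 1)
      have b4 := a3 (m + 1)
      simp only [f6, g6]
      have e5 : m + (m + 1) = m + 1 + m := by omega
      have e7 : m + 1 + (m + 1) = m + 1 + m + 1 := by omega
      have e6 : 2 * (m + 1) = 2 * m + 1 + 1 := by omega
      rw [e5, e6, e7]
      simp only [Po_succ, Nat.sub_self, Po_zero] at *
      have c1 := left_ne_zero_of_mul b1
      have c1' := right_ne_zero_of_mul b1
      have c3 := left_ne_zero_of_mul b3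
      have c3' := right_ne_zero_of_mul b3
      have c4 := left_ne_zero_of_mul b4
      have c4' := right_ne_zero_of_mul b4
      field_simp
      ring
    rw [z0]
    linear_combination zl


/-- Bailey pair entry α -/
def al (p s : K) (k : ℕ) : K :=
  (-1) ^ k * p ^ (k ^ 2) * (1 + s * p ^ (2 * k)) * Po (s ^ 2) (p ^ 2) k /
    ((1 + s) * Po (p ^ 2) (p ^ 2) k)

/-- Bailey pair entry β -/
def be (p s : K) (m : ℕ) : K :=
  Po p (p ^ 2) m / (Po (p ^ 2) (p ^ 2) m * Po (s * p) p (2 * m))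

lemma choose_two_pow (p : K) (j : ℕ) : (p ^ 2) ^ (j.choose 2) * p ^ j = p ^ (j ^ 2) := by
  rw [← pow_mul, ← pow_add]
  congr 1
  induction j with
  | zero => simp
  | succ j ih => rw [Nat.choose_succ_succ' j 1, Nat.choose_one_right]; nlinarith

lemma qinner_sum {p s b v : K} (hp : p ≠ 0) (h1 : ∀ i : ℕ, p ^ (i + 1) ≠ 1)
    (h2 : ∀ i : ℕ, s ^ 2 * p ^ (2 * i) ≠ 1) (hbv : b * v = s ^ 2) (k M : ℕ) :
    ∑ j ∈ range (M + 1), Po b (p ^ 2) (k + j) * (-1) ^ (k + j) * p ^ ((k + j) ^ 2 + (k + j)) *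
      v ^ (k + j) / (Po (p ^ 2) (p ^ 2) (M - j) * Po (p ^ 2) (p ^ 2) j *
        Po (s ^ 2 * p ^ 2) (p ^ 2) (k + j + k)) =
    Po b (p ^ 2) k * (-1) ^ k * p ^ (k ^ 2 + k) * v ^ k * Po (v * p ^ (2 * k + 2)) (p ^ 2) M /
      (Po (p ^ 2) (p ^ 2) M * Po (s ^ 2 * p ^ 2) (p ^ 2) (k + M + k)) := by
  have a1 : ∀ k, Po (p ^ 2) (p ^ 2) k ≠ 0 := fun k => Po_ne (fun j => by
    have := h1 (2 * j + 1)
    convert this using 1; ring) k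
  have a2 : ∀ k, Po (s ^ 2 * p ^ 2) (p ^ 2) k ≠ 0 := fun k => Po_ne (fun j => by
    have := h2 (j + 1)
    convert this using 1; ring) k
  rw [← qCV (p ^ 2) (b * (p ^ 2) ^ k) M (v * p ^ (2 * k + 2)), mul_sum, sum_div]
  refine sum_congr rfl fun j hj => ?_
  obtain ⟨i, rfl⟩ := Nat.exists_eq_add_of_le (Nat.lt_succ_iff.mp (mem_range.mp hj))
  have e0 : j + i - j = i := by omega
  rw [e0]
  have g := GB_Po (p ^ 2) j i
  have e1 : k + (j + i) + k = (k + j + k) + i := by ring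
  have e2 : b * (p ^ 2) ^ k * (v * p ^ (2 * k + 2)) * (p ^ 2) ^ j
      = s ^ 2 * p ^ 2 * (p ^ 2) ^ (k + j + k) := by
    rw [← hbv]; ring
  have hne := a2 (k + j + k + i)
  rw [e1, e2]
  rw [Po_add _ _ (k + j + k) i] at *
  have n1 := left_ne_zero_of_mul hne
  have n2 := right_ne_zero_of_mul hne
  have n3 := a1 (j + i)
  have n4 := a1 j
  have n5 := a1 i
  rw [Po_add b _ k j, ← g]
  have hG : GB (p ^ 2) (j + i) j ≠ 0 := by
    intro h0; rw [h0, zero_mul] at g; exact n3 g.symm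
  have c : p ^ ((k + j) ^ 2 + (k + j)) =
      p ^ (k ^ 2 + k) * ((p ^ 2) ^ (j.choose 2) * p ^ j) * p ^ (2 * k * j + j) := by
    rw [choose_two_pow]; ring
  rw [c]
  clear e2 a2 hne
  generalize Po (s ^ 2 * p ^ 2) (p ^ 2) (k + j + k) = z1 at *
  generalize Po (s ^ 2 * p ^ 2 * (p ^ 2) ^ (k + j + k)) (p ^ 2) i = z2 at *
  field_simp
  ring

lemma watson {p s b v : K} (hp : p ≠ 0) (h1 : ∀ i : ℕ, p ^ (i + 1) ≠ 1)
    (h2 : ∀ i : ℕ, s ^ 2 * p ^ (2 * i) ≠ 1) (hbv : b * v = s ^ 2) (N : ℕ) :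
    ∑ k ∈ range (N + 1), al p s k * (Po b (p ^ 2) k * (-1) ^ k * p ^ (k ^ 2 + k) * v ^ k *
      Po (v * p ^ (2 * k + 2)) (p ^ 2) (N - k) /
      (Po (p ^ 2) (p ^ 2) (N - k) * Po (s ^ 2 * p ^ 2) (p ^ 2) (N + k))) =
    ∑ m ∈ range (N + 1), Po b (p ^ 2) m * (-1) ^ m * p ^ (m ^ 2 + m) * v ^ m /
      Po (p ^ 2) (p ^ 2) (N - m) * be p s m := by
  have a1 : ∀ k, Po (p ^ 2) (p ^ 2) k ≠ 0 := fun k => Po_ne (fun j => by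
    have := h1 (2 * j + 1)
    convert this using 1; ring) k
  have a2 : ∀ k, Po (s ^ 2 * p ^ 2) (p ^ 2) k ≠ 0 := fun k => Po_ne (fun j => by
    have := h2 (j + 1)
    convert this using 1; ring) k
  have a3 : ∀ k, Po p (p ^ 2) k ≠ 0 := fun k => Po_ne (fun j => by
    have := h1 (2 * j)
    convert this using 1; ring) k
  have a4 : ∀ k, Po (s * p) p k ≠ 0 := fun k => Po_ne (fun j hj => by
    apply h2 (j + 1)
    calc s ^ 2 * p ^ (2 * (j + 1)) = (s * p * p ^ j) ^ 2 := by ring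
      _ = 1 := by rw [hj]; simp) k
  have hs : 1 + s ≠ 0 := by
    intro h
    apply h2 0
    have : s = -1 := by linear_combination h
    rw [this]; simp
  have hb : ∀ m, be p s m = ∑ k ∈ range (m + 1), al p s k /
      (Po (p ^ 2) (p ^ 2) (m - k) * Po (s ^ 2 * p ^ 2) (p ^ 2) (m + k)) := by
    intro m
    rw [← mul_one (be p s m), ← sum6 hp h1 h2 m, mul_sum]
    refine sum_congr rfl fun k _ => ?_
    simp only [be, f6, al]
    have := a1 m
    have := a1 k
    have := a1 (m - k)
    have := a2 (m + k)
    have := a3 m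
    have := a4 (2 * m)
    generalize Po (s * p) p (2 * m) = z1 at *
    generalize Po (s ^ 2 * p ^ 2) (p ^ 2) (m + k) = z2 at *
    field_simp
  simp only [hb, mul_sum]
  rw [sum_comm' (s' := fun k => Ico k (N + 1)) (t' := range (N + 1))]
  · refine sum_congr rfl fun k hk => ?_
    have hk' : k ≤ N := Nat.lt_succ_iff.mp (mem_range.mp hk)
    rw [sum_Ico_eq_sum_range]
    have e : N + 1 - k = (N - k) + 1 := by omega
    have e' : k + (N - k) + k = N + k := by omega
    have := qinner_sum hp h1 h2 hbv k (N - k)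
    rw [e'] at this
    rw [← this, e, mul_sum]
    refine sum_congr rfl fun j hj => ?_
    have e1 : N - (k + j) = N - k - j := by omega
    have e2 : k + j - k = j := by omega
    rw [e1, e2]
    have := a1 (N - k - j)
    have := a1 j
    have := a2 (k + j + k)
    generalize Po (s ^ 2 * p ^ 2) (p ^ 2) (k + j + k) = z2 at *
    field_simp
  · intro x y
    simp only [mem_range, mem_Ico]
    omega

end fieldlemmas

section ringpart

/-- quadratic factor `(1 - x u)(1 - u / x)` with `y = x + 1/x` -/
def ee {T : Type*} [CommRing T] (u y : T) : T := 1 + u ^ 2 - u * y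

/-- numerator of the left sum -/
def AL {T : Type*} [CommRing T] (p s si : T) (N : ℕ) (y : T) : T :=
  ∑ k ∈ range (N + 1), (-1) ^ k * (1 + s * p ^ (2 * k)) *
    (∏ j ∈ range k, (1 - s ^ 2 * p ^ (2 * j)) * ee (s ^ 2 * p ^ (2 * j)) y) *
    (∏ j ∈ Ico k N, (1 - p ^ (2 * (j + 1))) * ee (p ^ (2 * (j + 1))) y) *
    (p ^ (k ^ 2 + 2 * k) * si ^ (2 * k))

/-- denominator of the left sum -/
def DL {T : Type*} [CommRing T] (p s : T) (N : ℕ) (y : T) : T :=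
  (1 + s) * ∏ j ∈ range N, (1 - p ^ (2 * (j + 1))) * ee (p ^ (2 * (j + 1))) y

/-- numerator of the right sum -/
def AR {T : Type*} [CommRing T] (p s si : T) (N : ℕ) (y : T) : T :=
  ∑ k ∈ range (N + 1),
    (∏ j ∈ range k, ee (s ^ 2 * p ^ (2 * j)) y * (1 - p ^ (2 * j + 1))) *
    (∏ j ∈ Ico k N, (1 - p ^ (2 * (j + 1))) * ((1 - s * p ^ (2 * j + 1)) *
      (1 - s * p ^ (2 * j + 2)))) *
    (p ^ (2 * k) * si ^ (2 * k))

/-- denominator of the right sum -/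
def DR {T : Type*} [CommRing T] (p s : T) (N : ℕ) : T :=
  ∏ j ∈ range N, (1 - p ^ (2 * (j + 1))) * ((1 - s * p ^ (2 * j + 1)) *
      (1 - s * p ^ (2 * j + 2)))

/-- denominator of the right sum without the factor `1 - s p^N` -/
def DR' {T : Type*} [CommRing T] (p s : T) (N : ℕ) : T :=
  (∏ j ∈ range N, (1 - p ^ (2 * (j + 1)))) * ∏ i ∈ (range (2 * N)).erase (N - 1),
    (1 - s * p ^ (i + 1))

lemma prod_pair {T : Type*} [CommRing T] (F : ℕ → T) (N : ℕ) :
    ∏ j ∈ range N, (F (2 * j) * F (2 * j + 1)) = ∏ i ∈ range (2 * N), F i := by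
  induction N with
  | zero => simp
  | succ N ih =>
    rw [prod_range_succ, ih, show 2 * (N + 1) = 2 * N + 1 + 1 by ring, prod_range_succ,
      prod_range_succ, mul_assoc]

lemma DR_eq {T : Type*} [CommRing T] (p s : T) (N : ℕ) (hN : 0 < N) :
    DR p s N = (1 - s * p ^ N) * DR' p s N := by
  rw [DR, DR', prod_mul_distrib]
  have h := prod_pair (fun i => 1 - s * p ^ (i + 1)) N
  have h' := mul_prod_erase (range (2 * N)) (fun i => 1 - s * p ^ (i + 1))
    (a := N - 1) (mem_range.mpr (by omega))
  simp only [Nat.sub_add_cancel hN] at h'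
  rw [← h] at h'
  linear_combination -(∏ j ∈ range N, (1 - p ^ (2 * (j + 1)))) * h'

section maps
variable {S T : Type*} [CommRing S] [CommRing T] (φ : S →+* T)

lemma map_AL (p s si : S) (N : ℕ) (y : S) :
    φ (AL p s si N y) = AL (φ p) (φ s) (φ si) N (φ y) := by
  simp [AL, ee]

lemma map_AR (p s si : S) (N : ℕ) (y : S) :
    φ (AR p s si N y) = AR (φ p) (φ s) (φ si) N (φ y) := by
  simp [AR, ee]

lemma map_DL (p s : S) (N : ℕ) (y : S) :
    φ (DL p s N y) = DL (φ p) (φ s) N (φ y) := by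
  simp [DL, ee]

lemma map_DR' (p s : S) (N : ℕ) :
    φ (DR' p s N) = DR' (φ p) (φ s) N := by
  simp [DR']
end maps

lemma AL_term {T : Type*} [CommRing T] (p pi y : T) (hp : p * pi = 1) (k l : ℕ) :
    (-1) ^ k * (1 + (- pi ^ (k + l)) * p ^ (2 * k)) *
    (∏ j ∈ range k, (1 - (- pi ^ (k + l)) ^ 2 * p ^ (2 * j)) *
      ee ((- pi ^ (k + l)) ^ 2 * p ^ (2 * j)) y) *
    (∏ j ∈ Ico k (k + l), (1 - p ^ (2 * (j + 1))) * ee (p ^ (2 * (j + 1))) y) *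
    (p ^ (k ^ 2 + 2 * k) * (- p ^ (k + l)) ^ (2 * k)) =
    (pi ^ k - pi ^ l) * pi ^ (4 * k * l) *
    ((∏ j ∈ range k, (1 - p ^ (2 * (k + l - j))) * ee (p ^ (2 * (k + l - j))) y) *
     (∏ j ∈ range l, (1 - p ^ (2 * (k + l - j))) * ee (p ^ (2 * (k + l - j))) y)) := by
  have cancel : ∀ a b c : ℕ, a = b + c → p ^ a * pi ^ b = p ^ c := by
    intro a b c h
    rw [h, pow_add, mul_right_comm, ← mul_pow, hp, one_pow, one_mul]
  have cancel' : ∀ a b c : ℕ, a + c = b → p ^ a * pi ^ b = pi ^ c := by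
    intro a b c h
    rw [← h, pow_add, ← mul_assoc, ← mul_pow, hp, one_pow, one_mul]
  have P2 : ∏ j ∈ Ico k (k + l), (1 - p ^ (2 * (j + 1))) * ee (p ^ (2 * (j + 1))) y =
      ∏ j ∈ range l, (1 - p ^ (2 * (k + l - j))) * ee (p ^ (2 * (k + l - j))) y := by
    rw [prod_Ico_eq_prod_range, ← prod_range_reflect]
    have : k + l - k = l := by omega
    rw [this]
    refine prod_congr rfl fun j hj => ?_
    have := mem_range.mp hj
    have : k + (l - 1 - j) + 1 = k + l - j := by omega
    rw [this]
  have P1 : ∏ j ∈ range k, (1 - (- pi ^ (k + l)) ^ 2 * p ^ (2 * j)) *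
      ee ((- pi ^ (k + l)) ^ 2 * p ^ (2 * j)) y =
      (∏ j ∈ range k, (-1) * pi ^ (6 * (k + l - j))) *
      ∏ j ∈ range k, (1 - p ^ (2 * (k + l - j))) * ee (p ^ (2 * (k + l - j))) y := by
    rw [← prod_mul_distrib]
    refine prod_congr rfl fun j hj => ?_
    have hj := mem_range.mp hj
    have e : (- pi ^ (k + l)) ^ 2 * p ^ (2 * j) = pi ^ (2 * (k + l - j)) := by
      rw [← cancel' (2 * j) (2 * (k + l)) (2 * (k + l - j)) (by omega)]
      ring
    rw [e]
    have h1 : p ^ (2 * (k + l - j)) * pi ^ (2 * (k + l - j)) = 1 := by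
      rw [← mul_pow, hp, one_pow]
    have e6 : pi ^ (6 * (k + l - j)) = (pi ^ (2 * (k + l - j))) ^ 3 := by
      rw [← pow_mul]; congr 1; ring
    rw [e6]
    generalize p ^ (2 * (k + l - j)) = P at *
    generalize pi ^ (2 * (k + l - j)) = Q at *
    simp only [ee]
    have h2 : P ^ 2 * Q ^ 2 = 1 := by rw [← mul_pow, h1, one_pow]
    have h3 : 1 - Q = -Q * (1 - P) := by linear_combination -h1
    have h4 : 1 + Q ^ 2 - Q * y = Q ^ 2 * (1 + P ^ 2 - P * y) := by
      linear_combination Q * y * h1 - h2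
    rw [h3, h4]
    ring
  have P3 : ∏ j ∈ range k, (-1 : T) * pi ^ (6 * (k + l - j)) =
      (-1) ^ k * pi ^ (3 * k * (k + 2 * l + 1)) := by
    rw [prod_mul_distrib, prod_const, card_range, prod_pow_eq_pow_sum]
    congr 2
    have : ∀ m ≤ k, ∑ i ∈ range m, 6 * (k + l - i) + 3 * m * (m - 1) = 6 * m * (k + l) := by
      intro m
      induction m with
      | zero => simp
      | succ m ih =>
        intro hm
        have := ih (by omega)
        rw [sum_range_succ]
        obtain ⟨c, rfl⟩ := Nat.exists_eq_add_of_le hm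
        have e : m + 1 + c + l - m = 1 + c + l := by omega
        rw [e]
        cases m with
        | zero => simp at *; try ring
        | succ m => simp only [Nat.add_sub_cancel] at *; nlinarith
    have := this k le_rfl
    cases k with
    | zero => simp
    | succ k => simp only [Nat.add_sub_cancel] at *; nlinarith
  rw [P1, P2, P3]
  have c1 : p ^ (k ^ 2 + 2 * k) * (- p ^ (k + l)) ^ (2 * k) * pi ^ (3 * k * (k + 2 * l + 1)) =
      pi ^ (k + 4 * k * l) := by
    rw [pow_mul (- p ^ (k + l)) 2 k, neg_sq, ← pow_mul, ← pow_mul, ← pow_add]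
    exact cancel' _ _ _ (by ring)
  have c2 : (1 + (- pi ^ (k + l)) * p ^ (2 * k)) * pi ^ k = pi ^ k - pi ^ l := by
    have := cancel' (2 * k) (k + l + k) l (by ring)
    rw [pow_add] at this
    linear_combination -this
  have c3 : (-1 : T) ^ k * (-1) ^ k = 1 := by rw [← mul_pow]; simp
  rw [pow_add pi k] at c1
  generalize (∏ j ∈ range k, (1 - p ^ (2 * (k + l - j))) * ee (p ^ (2 * (k + l - j))) y) = Z1
  generalize (∏ j ∈ range l, (1 - p ^ (2 * (k + l - j))) * ee (p ^ (2 * (k + l - j))) y) = Z2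
  generalize p ^ (k ^ 2 + 2 * k) = x1 at *
  generalize (- p ^ (k + l)) ^ (2 * k) = x2 at *
  generalize pi ^ (3 * k * (k + 2 * l + 1)) = x3 at *
  generalize pi ^ (4 * k * l) = x4 at *
  generalize (-1 : T) ^ k = x5 at *
  rw [← c2]
  linear_combination (1 + -pi ^ (k + l) * p ^ (2 * k)) * Z1 * Z2 * c1 +
    (1 + -pi ^ (k + l) * p ^ (2 * k)) * Z1 * Z2 * x1 * x2 * x3 * c3

lemma AL_neg_one {T : Type*} [CommRing T] (p pi s si y : T) (N : ℕ) (hp : p * pi = 1)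
    (hs : s * si = 1) (hw : s * p ^ N = -1) (h2 : IsUnit (2 : T)) :
    AL p s si N y = 0 := by
  have hpN : p ^ N * pi ^ N = 1 := by rw [← mul_pow, hp, one_pow]
  have s1 : s = - pi ^ N := by linear_combination pi ^ N * hw - s * hpN
  have s2 : si = - p ^ N := by linear_combination si * hw - p ^ N * hs
  subst s1 s2
  set Z : ℕ → T := fun k =>
    (∏ j ∈ range k, (1 - p ^ (2 * (N - j))) * ee (p ^ (2 * (N - j))) y) with hZ
  have e : AL p (- pi ^ N) (- p ^ N) N y =
      ∑ k ∈ range (N + 1), (pi ^ k - pi ^ (N - k)) * pi ^ (4 * k * (N - k)) * (Z k * Z (N - k)) := by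
    refine sum_congr rfl fun k hk => ?_
    obtain ⟨l, rfl⟩ := Nat.exists_eq_add_of_le (Nat.lt_succ_iff.mp (mem_range.mp hk))
    rw [AL_term p pi y hp k l]
    simp only [hZ, Nat.add_sub_cancel_left]
  have e' := e
  rw [← sum_range_reflect] at e'
  have : AL p (- pi ^ N) (- p ^ N) N y = - AL p (- pi ^ N) (- p ^ N) N y := by
    conv_rhs => rw [e]
    rw [e', ← sum_neg_distrib]
    refine sum_congr rfl fun k hk => ?_
    obtain ⟨l, rfl⟩ := Nat.exists_eq_add_of_le (Nat.lt_succ_iff.mp (mem_range.mp hk))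
    have e1 : k + l + 1 - 1 - k = l := by omega
    have e2 : k + l - l = k := by omega
    have e3 : k + l - k = l := by omega
    rw [e1, e2, e3, show 4 * l * k = 4 * k * l by ring]
    ring
  have h0 : 2 * AL p (- pi ^ N) (- p ^ N) N y = 2 * 0 := by linear_combination this
  exact h2.mul_left_cancel h0

end ringpart

section evalzero
variable {K : Type*} [Field K]

lemma F1 {p : K} (hp : p ≠ 0) (N : ℕ) : ∀ k l : ℕ, k + l = N →
    Po ((p⁻¹) ^ (2 * N)) (p ^ 2) k * Po (p ^ 2) (p ^ 2) l * p ^ (2 * N * k) * p ^ k =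
      (-1) ^ k * p ^ (k ^ 2) * Po (p ^ 2) (p ^ 2) N
  | 0, l, h => by simp at h; simp [Po_zero, h]
  | k + 1, l, h => by
    have ih := F1 hp N k (l + 1) (by omega)
    rw [Po_succ _ _ l] at ih
    rw [Po_succ _ _ k]
    have e : (1 - (p⁻¹) ^ (2 * N) * (p ^ 2) ^ k) * p ^ (2 * N) =
        - (p ^ (2 * k) * (1 - p ^ 2 * (p ^ 2) ^ l)) := by
      subst h
      simp only [inv_pow]
      field_simp
      ring
    calc _ = (Po ((p⁻¹) ^ (2 * N)) (p ^ 2) k * Po (p ^ 2) (p ^ 2) l * p ^ (2 * N * k) * p ^ k * p) *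
          ((1 - (p⁻¹) ^ (2 * N) * (p ^ 2) ^ k) * p ^ (2 * N)) := by ring
      _ = _ := by rw [e]; linear_combination (-p * p ^ (2 * k)) * ih

lemma F4 {p s : K} (hp : p ≠ 0) (hs : s ≠ 0) (N : ℕ) :
    Po ((s⁻¹) ^ 2 * (p⁻¹) ^ (2 * N) * p ^ 2) (p ^ 2) N * s ^ (2 * N) * p ^ (N ^ 2) =
      (-1) ^ N * p ^ N * Po (s ^ 2) (p ^ 2) N := by
  have e : Po ((s⁻¹) ^ 2 * (p⁻¹) ^ (2 * N) * p ^ 2) (p ^ 2) N =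
      ∏ j ∈ range N, (1 - (s⁻¹) ^ 2 * (p⁻¹) ^ (2 * j)) := by
    rw [Po, ← prod_range_reflect]
    refine prod_congr rfl fun j hj => ?_
    have := mem_range.mp hj
    obtain ⟨l, rfl⟩ := Nat.exists_eq_add_of_lt this
    have : j + l + 1 - 1 - j = l := by omega
    rw [this]
    simp only [inv_pow]
    field_simp
    ring
  rw [e]
  clear e
  induction N with
  | zero => simp [Po_zero]
  | succ N ih =>
    rw [prod_range_succ, Po_succ]
    have e : (1 - (s⁻¹) ^ 2 * (p⁻¹) ^ (2 * N)) * (s ^ 2 * p ^ (2 * N)) =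
        - (1 - s ^ 2 * (p ^ 2) ^ N) := by
      simp only [inv_pow]
      field_simp
      ring
    calc _ = ((∏ j ∈ range N, (1 - (s⁻¹) ^ 2 * (p⁻¹) ^ (2 * j))) * s ^ (2 * N) * p ^ (N ^ 2) * p) *
          ((1 - (s⁻¹) ^ 2 * (p⁻¹) ^ (2 * N)) * (s ^ 2 * p ^ (2 * N))) := by ring
      _ = _ := by rw [e, ih]; ring

lemma ee_y0 (u w : K) (hw : w ≠ 0) :
    ee u (w ^ 2 + (w⁻¹) ^ 2) = (1 - u * w ^ 2) * (1 - u * (w⁻¹) ^ 2) := by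
  simp only [ee]
  field_simp
  ring

lemma eval_zero {p s : K} (hp : p ≠ 0) (hs : s ≠ 0) (h1 : ∀ i : ℕ, p ^ (i + 1) ≠ 1)
    (h2 : ∀ i : ℕ, s ^ 2 * p ^ (2 * i) ≠ 1) (N : ℕ) (hN : 0 < N) :
    AL p s s⁻¹ N ((s * p ^ N) ^ 2 + ((s * p ^ N)⁻¹) ^ 2) * ((1 - s ^ 2) * DR' p s N) =
    (1 + s * p ^ N) * ((-1) ^ N * (s * p ^ N * s * p⁻¹) ^ N) *
      AR p s s⁻¹ N ((s * p ^ N) ^ 2 + ((s * p ^ N)⁻¹) ^ 2) *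
      DL p s N ((s * p ^ N) ^ 2 + ((s * p ^ N)⁻¹) ^ 2) := by
  have hw : s * p ^ N ≠ 0 := mul_ne_zero hs (pow_ne_zero _ hp)
  have a1 : ∀ k, Po (p ^ 2) (p ^ 2) k ≠ 0 := fun k => Po_ne (fun j => by
    have := h1 (2 * j + 1)
    convert this using 1; ring) k
  have a2 : ∀ k, Po (s ^ 2 * p ^ 2) (p ^ 2) k ≠ 0 := fun k => Po_ne (fun j => by
    have := h2 (j + 1)
    convert this using 1; ring) k
  have a2' : ∀ k, Po (s ^ 2) (p ^ 2) k ≠ 0 := fun k => Po_ne (fun j => by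
    have := h2 j
    convert this using 1; ring) k
  have a4 : ∀ k, Po (s * p) p k ≠ 0 := fun k => Po_ne (fun j hj => by
    apply h2 (j + 1)
    calc s ^ 2 * p ^ (2 * (j + 1)) = (s * p * p ^ j) ^ 2 := by ring
      _ = 1 := by rw [hj]; simp) k
  have hs1 : 1 + s ≠ 0 := by
    intro h
    apply h2 0
    have : s = -1 := by linear_combination h
    rw [this]; simp
  have hw1 : 1 - s * p ^ N ≠ 0 := by
    intro h
    apply h2 N
    have : s * p ^ N = 1 := by linear_combination -h
    calc s ^ 2 * p ^ (2 * N) = (s * p ^ N) ^ 2 := by ring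
      _ = 1 := by rw [this]; simp
  set v : K := (s⁻¹) ^ 2 * (p⁻¹) ^ (2 * N) with hv
  set b : K := s ^ 4 * p ^ (2 * N) with hb
  have hbv : b * v = s ^ 2 := by rw [hb, hv]; simp only [inv_pow]; field_simp
  have W := watson hp h1 h2 hbv N
  set Z := Po (v * p ^ 2) (p ^ 2) N with hZ
  have z4 : Z * s ^ (2 * N) * p ^ (N ^ 2) = (-1) ^ N * p ^ N * Po (s ^ 2) (p ^ 2) N := F4 hp hs N
  have hZ0 : Z ≠ 0 := by
    intro h0
    rw [h0, zero_mul, zero_mul] at z4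
    exact mul_ne_zero (mul_ne_zero (pow_ne_zero _ (by simp)) (pow_ne_zero _ hp)) (a2' N) z4.symm
  have hvk : ∀ k, v ^ k * p ^ (2 * N * k) = (s⁻¹) ^ (2 * k) := by
    intro k
    rw [hv, mul_pow, ← pow_mul, ← pow_mul, mul_assoc, ← mul_pow, inv_mul_cancel₀ hp]
    simp
  set y0 := (s * p ^ N) ^ 2 + ((s * p ^ N)⁻¹) ^ 2 with hy
  have hee : ∀ u, ee u y0 = (1 - u * (s * p ^ N) ^ 2) * (1 - u * v) := by
    intro u; rw [hy, ee_y0 _ _ hw, hv]; congr 3; rw [mul_inv, mul_pow, ← inv_pow, ← pow_mul, mul_comm N 2]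
  have L1 : ∀ k, ∏ j ∈ range k, ee (s ^ 2 * p ^ (2 * j)) y0 =
      Po b (p ^ 2) k * Po ((p⁻¹) ^ (2 * N)) (p ^ 2) k := by
    intro k
    simp only [Po, ← prod_mul_distrib]
    refine prod_congr rfl fun j _ => ?_
    rw [hee]
    congr 2
    · rw [hb]; ring
    · rw [hv]; simp only [inv_pow]; field_simp; ring
  have L2 : ∀ k, ∏ j ∈ range k, (1 - s ^ 2 * p ^ (2 * j)) = Po (s ^ 2) (p ^ 2) k := by
    intro k
    simp only [Po, pow_mul]
  have L3 : ∀ k, ∏ j ∈ range k, (1 - p ^ (2 * (j + 1))) = Po (p ^ 2) (p ^ 2) k := by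
    intro k
    refine prod_congr rfl fun j _ => ?_
    ring
  have L4 : ∀ k, ∏ j ∈ range k, ee (p ^ (2 * (j + 1))) y0 =
      Po (s ^ 2 * p ^ 2 * (p ^ 2) ^ N) (p ^ 2) k * Po (v * p ^ 2) (p ^ 2) k := by
    intro k
    simp only [Po, ← prod_mul_distrib]
    refine prod_congr rfl fun j _ => ?_
    rw [hee]
    congr 2 <;> ring
  have L5 : ∀ k, ∏ j ∈ range k, (1 - p ^ (2 * j + 1)) = Po p (p ^ 2) k := by
    intro k
    refine prod_congr rfl fun j _ => ?_
    ring
  have L6 : ∀ k, ∏ j ∈ range k, ((1 - s * p ^ (2 * j + 1)) * (1 - s * p ^ (2 * j + 2))) =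
      Po (s * p) p (2 * k) := by
    intro k
    have := prod_pair (fun i => 1 - s * p ^ (i + 1)) k
    rw [Po]
    convert this using 1
    refine prod_congr rfl fun j _ => ?_
    ring
  have PL : ∀ k, ∏ j ∈ range k, (1 - s ^ 2 * p ^ (2 * j)) * ee (s ^ 2 * p ^ (2 * j)) y0 =
      Po (s ^ 2) (p ^ 2) k * (Po b (p ^ 2) k * Po ((p⁻¹) ^ (2 * N)) (p ^ 2) k) := by
    intro k; rw [prod_mul_distrib, L1, L2]
  have PM : ∀ k, ∏ j ∈ range k, (1 - p ^ (2 * (j + 1))) * ee (p ^ (2 * (j + 1))) y0 =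
      Po (p ^ 2) (p ^ 2) k * (Po (s ^ 2 * p ^ 2 * (p ^ 2) ^ N) (p ^ 2) k *
        Po (v * p ^ 2) (p ^ 2) k) := by
    intro k; rw [prod_mul_distrib, L3, L4]
  have PN : ∀ k, ∏ j ∈ range k, ee (s ^ 2 * p ^ (2 * j)) y0 * (1 - p ^ (2 * j + 1)) =
      Po b (p ^ 2) k * Po ((p⁻¹) ^ (2 * N)) (p ^ 2) k * Po p (p ^ 2) k := by
    intro k; rw [prod_mul_distrib, L1, L5]
  have PD : ∀ k, ∏ j ∈ range k, (1 - p ^ (2 * (j + 1))) * ((1 - s * p ^ (2 * j + 1)) *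
      (1 - s * p ^ (2 * j + 2))) = Po (p ^ 2) (p ^ 2) k * Po (s * p) p (2 * k) := by
    intro k; rw [prod_mul_distrib, L3, L6]
  have hDL : DL p s N y0 ≠ 0 := by
    rw [DL, prod_mul_distrib, L3, L4]
    refine mul_ne_zero hs1 (mul_ne_zero (a1 N) (mul_ne_zero ?_ hZ0))
    have := a2 (N + N)
    rw [Po_add] at this
    exact right_ne_zero_of_mul this
  have hDR : DR p s N ≠ 0 := by
    rw [DR, prod_mul_distrib, L3, L6]
    exact mul_ne_zero (a1 N) (a4 _)
  have E1 : AL p s s⁻¹ N y0 * (Z / Po (s ^ 2 * p ^ 2) (p ^ 2) N) / DL p s N y0 =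
      Po (p ^ 2) (p ^ 2) N *
      ∑ k ∈ range (N + 1), al p s k * (Po b (p ^ 2) k * (-1) ^ k * p ^ (k ^ 2 + k) * v ^ k *
      Po (v * p ^ (2 * k + 2)) (p ^ 2) (N - k) /
      (Po (p ^ 2) (p ^ 2) (N - k) * Po (s ^ 2 * p ^ 2) (p ^ 2) (N + k))) := by
    rw [AL, sum_mul, sum_div, mul_sum]
    refine sum_congr rfl fun k hk => ?_
    have hkN : k ≤ N := Nat.lt_succ_iff.mp (mem_range.mp hk)
    have hsplit := prod_range_mul_prod_Ico
      (fun j => (1 - p ^ (2 * (j + 1))) * ee (p ^ (2 * (j + 1))) y0) hkN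
    rw [DL, ← hsplit] at hDL
    rw [DL, ← hsplit]
    have t1 := F1 hp N k (N - k) (by omega)
    have t2 : Z = Po (v * p ^ 2) (p ^ 2) k * Po (v * p ^ (2 * k + 2)) (p ^ 2) (N - k) := by
      have := Po_add (v * p ^ 2) (p ^ 2) k (N - k)
      rw [Nat.add_sub_cancel' hkN] at this
      rw [hZ, this]; congr 2; ring
    have t3 := Po_add (s ^ 2 * p ^ 2) (p ^ 2) N k
    have t5 := hvk k
    have n1 := a2 (N + k)
    rw [t3] at n1
    rw [t3]
    have hZ1 := hZ0
    rw [t2] at hZ1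
    rw [t2, PL, PM, al]
    have n2 := a1 (N - k)
    have n3 := a1 N
    have n4 := left_ne_zero_of_mul n1
    have n5 := right_ne_zero_of_mul n1
    have n6 := a1 k
    have n7 := left_ne_zero_of_mul hZ1
    have n8 := right_ne_zero_of_mul (right_ne_zero_of_mul hDL)
    have n9 : ((-1 : K)) ^ k * (-1) ^ k = 1 := by rw [← mul_pow]; simp
    have n10 : p ^ k ≠ 0 := pow_ne_zero _ hp
    have n11 : p ^ (2 * N * k) ≠ 0 := pow_ne_zero _ hp
    rw [← t5]
    clear hsplit PL PM PN PD
    generalize ∏ j ∈ Ico k N, ((1 - p ^ (2 * (j + 1))) * ee (p ^ (2 * (j + 1))) y0) = q1 at *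
    generalize Po (s ^ 2 * p ^ 2) (p ^ 2) N = q2 at *
    generalize Po (s ^ 2 * p ^ 2 * (p ^ 2) ^ N) (p ^ 2) k = q3 at *
    generalize Po (v * p ^ 2) (p ^ 2) k = q4 at *
    generalize Po (v * p ^ (2 * k + 2)) (p ^ 2) (N - k) = q5 at *
    generalize Po (p⁻¹ ^ (2 * N)) (p ^ 2) k = q6 at *
    generalize Po (p ^ 2) (p ^ 2) (N - k) = q7 at *
    generalize Po (p ^ 2) (p ^ 2) N = q8 at *
    generalize Po (p ^ 2) (p ^ 2) k = q9 at *
    generalize Po b (p ^ 2) k = q10 at *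
    generalize Po (s ^ 2) (p ^ 2) k = q11 at *
    have e1 : p ^ (k ^ 2 + 2 * k) = p ^ (k ^ 2) * p ^ k * p ^ k := by ring
    have e2 : p ^ (k ^ 2 + k) = p ^ (k ^ 2) * p ^ k := by ring
    rw [e1, e2]
    generalize p ^ (k ^ 2) = q12 at *
    generalize p ^ k = q13 at *
    generalize p ^ (2 * N * k) = q14 at *
    generalize p ^ (2 * k) = q15 at *
    generalize v ^ k = q16 at *
    generalize (-1 : K) ^ k = q17 at *
    clear_value v b y0 Z
    clear t5 t3 t2 W L1 L2 L3 L4 L5 L6 hee hvk a1 a2 a2' a4 e1 e2 hbv hDR z4 h1 h2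
    field_simp
    linear_combination q17 * (1 + s * q15) * q11 * q10 * q12 * q16 * q5 * t1
  have E2 : AR p s s⁻¹ N y0 / DR p s N = Po (p ^ 2) (p ^ 2) N *
      ∑ m ∈ range (N + 1), Po b (p ^ 2) m * (-1) ^ m * p ^ (m ^ 2 + m) * v ^ m /
      Po (p ^ 2) (p ^ 2) (N - m) * be p s m := by
    rw [AR, sum_div, mul_sum]
    refine sum_congr rfl fun k hk => ?_
    have hkN : k ≤ N := Nat.lt_succ_iff.mp (mem_range.mp hk)
    have hsplit := prod_range_mul_prod_Ico
      (fun j => (1 - p ^ (2 * (j + 1))) * ((1 - s * p ^ (2 * j + 1)) *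
      (1 - s * p ^ (2 * j + 2)))) hkN
    rw [DR, ← hsplit] at hDR
    rw [DR, ← hsplit]
    have t1 := F1 hp N k (N - k) (by omega)
    have t5 := hvk k
    rw [PN, PD, be]
    have n2 := a1 (N - k)
    have n3 := a1 N
    have n4 := a4 (2 * k)
    have n6 := a1 k
    have n8 := right_ne_zero_of_mul hDR
    have n10 : p ^ k ≠ 0 := pow_ne_zero _ hp
    have n11 : p ^ (2 * N * k) ≠ 0 := pow_ne_zero _ hp
    rw [← t5]
    clear hsplit PL PM PN PD
    generalize ∏ j ∈ Ico k N, ((1 - p ^ (2 * (j + 1))) * ((1 - s * p ^ (2 * j + 1)) *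
      (1 - s * p ^ (2 * j + 2)))) = q1 at *
    generalize Po (s * p) p (2 * k) = q2 at *
    generalize Po p (p ^ 2) k = q3 at *
    generalize Po (p⁻¹ ^ (2 * N)) (p ^ 2) k = q6 at *
    generalize Po (p ^ 2) (p ^ 2) (N - k) = q7 at *
    generalize Po (p ^ 2) (p ^ 2) N = q8 at *
    generalize Po (p ^ 2) (p ^ 2) k = q9 at *
    generalize Po b (p ^ 2) k = q10 at *
    have e1 : p ^ (2 * k) = p ^ k * p ^ k := by ring
    have e2 : p ^ (k ^ 2 + k) = p ^ (k ^ 2) * p ^ k := by ring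
    rw [e1, e2]
    generalize p ^ (k ^ 2) = q12 at *
    generalize p ^ k = q13 at *
    generalize p ^ (2 * N * k) = q14 at *
    generalize v ^ k = q16 at *
    generalize (-1 : K) ^ k = q17 at *
    clear_value v b y0 Z
    clear t5 W L1 L2 L3 L4 L5 L6 hee hvk a1 a2 a2' a4 e1 e2 hbv hDL z4 h1 h2 E1
    field_simp
    linear_combination q10 * q3 * q16 * t1
  rw [W, ← E2] at E1
  have n4 := a2 N
  have hpo : (1 - s ^ 2) * Po (s ^ 2 * p ^ 2) (p ^ 2) N =
      Po (s ^ 2) (p ^ 2) N * (1 - (s * p ^ N) ^ 2) := by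
    rw [← Po_succ', Po_succ]; ring
  have hc : ((-1) ^ N * (s * p ^ N * s * p⁻¹) ^ N) * Z = Po (s ^ 2) (p ^ 2) N := by
    have n9 : ((-1 : K)) ^ N * (-1) ^ N = 1 := by rw [← mul_pow]; simp
    have e : (s * p ^ N * s * p⁻¹) ^ N * p ^ N = s ^ (2 * N) * p ^ (N ^ 2) := by
      rw [← mul_pow]
      field_simp
      ring
    have := pow_ne_zero N hp
    apply mul_right_cancel₀ this
    linear_combination (-1) ^ N * Z * e + (-1) ^ N * z4 + p ^ N * Po (s ^ 2) (p ^ 2) N * n9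
  rw [DR_eq p s N hN] at *
  rw [div_eq_div_iff hDL hDR, ← mul_div_assoc, div_mul_eq_mul_div, div_eq_iff n4] at E1
  apply mul_right_cancel₀ (mul_ne_zero hw1 hZ0)
  generalize AL p s s⁻¹ N y0 = q1 at *
  generalize AR p s s⁻¹ N y0 = q2 at *
  generalize DL p s N y0 = q3 at *
  generalize DR' p s N = q4 at *
  generalize ((-1) ^ N * (s * p ^ N * s * p⁻¹) ^ N) = q5 at *
  linear_combination (1 - s ^ 2) * E1 + q2 * q3 * hpo -
    (1 - (s * p ^ N)) * (1 + (s * p ^ N)) * q2 * q3 * hc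

end evalzero

section key

lemma AL_dvd {R : Type*} [CommRing R] (p pi s si : R) (N : ℕ) (hp : p * pi = 1)
    (hs : s * si = 1) (h2 : IsUnit (2 : R)) :
    (C (1 + s * p ^ N) : R[X]) ∣ AL (C p) (C s) (C si) N X := by
  rw [← Ideal.mem_span_singleton, ← Ideal.Quotient.eq_zero_iff_mem]
  set I := Ideal.span {(C (1 + s * p ^ N) : R[X])}
  set φ := (Ideal.Quotient.mk I)
  rw [map_AL]
  refine AL_neg_one (φ (C p)) (φ (C pi)) _ _ _ N ?_ ?_ ?_ ?_
  · rw [← map_mul, ← C_mul, hp]; simp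
  · rw [← map_mul, ← C_mul, hs]; simp
  · have : φ (C (1 + s * p ^ N)) = 0 :=
      Ideal.Quotient.eq_zero_iff_mem.mpr (Ideal.mem_span_singleton_self _)
    simp only [map_add, map_one, map_mul, map_pow] at this
    linear_combination this
  · have := (h2.map (C : R →+* R[X])).map φ
    rw [map_ofNat C 2, map_ofNat φ 2] at this
    exact this

lemma key_dvd {R K : Type*} [CommRing R] [Field K] (φ : R →+* K)
    (hφ : Function.Injective φ) (p pi s si : R) (N : ℕ) (hN : 0 < N) (hp : p * pi = 1)
    (hs : s * si = 1) (h2 : IsUnit (2 : R)) (h1 : ∀ i : ℕ, (φ p) ^ (i + 1) ≠ 1)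
    (h3 : ∀ i : ℕ, (φ s) ^ 2 * (φ p) ^ (2 * i) ≠ 1) :
    (1 + s * p ^ N) * (1 - (s * p ^ N) ^ 2) ^ 2 ∣
      AL p s si N 2 * ((1 - s ^ 2) * DR' p s N) -
        (1 + s * p ^ N) * ((-1) ^ N * (s * p ^ N * s * pi) ^ N) * AR p s si N 2 * DL p s N 2 := by
  have hpK : φ p * φ pi = 1 := by rw [← map_mul, hp, map_one]
  have hsK : φ s * φ si = 1 := by rw [← map_mul, hs, map_one]
  have hp0 : φ p ≠ 0 := left_ne_zero_of_mul_eq_one hpK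
  have hs0 : φ s ≠ 0 := left_ne_zero_of_mul_eq_one hsK
  have hpi : φ pi = (φ p)⁻¹ := eq_inv_of_mul_eq_one_right hpK
  have hsi : φ si = (φ s)⁻¹ := eq_inv_of_mul_eq_one_right hsK
  obtain ⟨B, hB⟩ := AL_dvd p pi s si N hp hs h2
  set w := s * p ^ N with hw
  set wi := si * pi ^ N with hwi
  have hww : w * wi = 1 := by
    rw [hw, hwi, mul_mul_mul_comm, hs, ← mul_pow, hp]; simp
  set c := ((-1) ^ N * (w * s * pi) ^ N) with hc
  set E := (1 - s ^ 2) * DR' p s N with hE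
  have hev : ∀ y : R, AL p s si N y = (1 + w) * B.eval y := by
    intro y
    have := congrArg (evalRingHom y) hB
    rw [map_AL] at this
    simpa using this
  set A' : R[X] := B * C E - C c * AR (C p) (C s) (C si) N X * DL (C p) (C s) N X with hA'
  have hA : ∀ y : R, A'.eval y = B.eval y * E - c * AR p s si N y * DL p s N y := by
    intro y
    have e1 := map_AR (evalRingHom y) (C p) (C s) (C si) N X
    have e2 := map_DL (evalRingHom y) (C p) (C s) N X
    simp only [coe_evalRingHom, eval_C, eval_X] at e1 e2
    simp [hA', e1, e2]
  have hy : φ (w ^ 2 + wi ^ 2) =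
      (φ s * φ p ^ N) ^ 2 + ((φ s * φ p ^ N)⁻¹) ^ 2 := by
    rw [hw, hwi]; simp [hpi, hsi, mul_comm]
  have hy0 : A'.eval (w ^ 2 + wi ^ 2) = 0 := by
    have ez := eval_zero hp0 hs0 h1 h3 N hN
    apply hφ
    have hne : φ (1 + w) ≠ 0 := by
      intro h0
      apply h3 N
      have : φ s * φ p ^ N = -1 := by
        rw [hw] at h0; simp only [map_add, map_one, map_mul, map_pow] at h0
        linear_combination h0
      calc (φ s) ^ 2 * (φ p) ^ (2 * N) = (φ s * φ p ^ N) ^ 2 := by ring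
        _ = 1 := by rw [this]; simp
    apply mul_left_cancel₀ hne
    rw [map_zero, mul_zero, ← map_mul, hA]
    have : (1 + w) * (B.eval (w ^ 2 + wi ^ 2) * E - c * AR p s si N (w ^ 2 + wi ^ 2) *
        DL p s N (w ^ 2 + wi ^ 2)) = AL p s si N (w ^ 2 + wi ^ 2) * E -
        (1 + w) * c * AR p s si N (w ^ 2 + wi ^ 2) * DL p s N (w ^ 2 + wi ^ 2) := by
      rw [hev]; ring
    rw [this, map_sub, sub_eq_zero]
    simp only [map_mul φ, map_AL, map_AR, map_DL, hE, map_DR', hy, hc, hsi]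
    simp only [map_sub, map_one, map_pow, map_mul, map_add, map_neg, hw, hpi]
    exact ez
  have hd := sub_dvd_eval_sub (2 : R) (w ^ 2 + wi ^ 2) A'
  rw [hy0, sub_zero] at hd
  obtain ⟨t, ht⟩ := hd
  rw [hA] at ht
  refine ⟨- wi ^ 2 * t, ?_⟩
  rw [hev]
  have h4 : (2 - (w ^ 2 + wi ^ 2)) = - wi ^ 2 * (1 - w ^ 2) ^ 2 := by
    have h5 : w ^ 2 * wi ^ 2 = 1 := by rw [← mul_pow, hww, one_pow]
    linear_combination (-2 + w ^ 2) * h5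
  rw [h4] at ht
  linear_combination (1 + w) * ht

end key

section fieldsums
variable {K : Type*} [Field K]

lemma DL_two (p s : K) (N : ℕ) : DL p s N 2 = (1 + s) * Po (p ^ 2) (p ^ 2) N ^ 3 := by
  rw [DL, Po, ← prod_pow]
  congr 1
  refine prod_congr rfl fun j _ => ?_
  simp only [ee]; ring

lemma DR_po (p s : K) (N : ℕ) : DR p s N = Po (p ^ 2) (p ^ 2) N *
    Po (p * s) (p ^ 2) N * Po (p ^ 2 * s) (p ^ 2) N := by
  rw [DR, Po, Po, Po, ← prod_mul_distrib, ← prod_mul_distrib]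
  refine prod_congr rfl fun j _ => ?_
  ring

lemma sum_left {p s : K} (N : ℕ) (hD : DL p s N 2 ≠ 0) :
    ∑ k ∈ range (N + 1), (-1) ^ k * ((1 + s * p ^ (2 * k)) * Po (s ^ 2) (p ^ 2) k ^ 3) /
      ((1 + s) * Po (p ^ 2) (p ^ 2) k ^ 3) * (p ^ (k ^ 2 + 2 * k) * s⁻¹ ^ (2 * k)) =
    AL p s s⁻¹ N 2 / DL p s N 2 := by
  rw [AL, sum_div]
  refine sum_congr rfl fun k hk => ?_
  have hkN : k ≤ N := Nat.lt_succ_iff.mp (mem_range.mp hk)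
  have hsplit := prod_range_mul_prod_Ico
    (fun j => (1 - p ^ (2 * (j + 1))) * ee (p ^ (2 * (j + 1))) 2) hkN
  rw [DL, ← hsplit] at hD
  rw [DL, ← hsplit]
  have e1 : ∏ j ∈ range k, (1 - s ^ 2 * p ^ (2 * j)) * ee (s ^ 2 * p ^ (2 * j)) 2 =
      Po (s ^ 2) (p ^ 2) k ^ 3 := by
    rw [Po, ← prod_pow]
    refine prod_congr rfl fun j _ => ?_
    simp only [ee]; ring
  have e2 : ∏ j ∈ range k, (1 - p ^ (2 * (j + 1))) * ee (p ^ (2 * (j + 1))) 2 =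
      Po (p ^ 2) (p ^ 2) k ^ 3 := by
    rw [Po, ← prod_pow]
    refine prod_congr rfl fun j _ => ?_
    simp only [ee]; ring
  rw [e2] at hD
  rw [e1, e2]
  clear hsplit
  have n1 := left_ne_zero_of_mul hD
  have n2 := left_ne_zero_of_mul (right_ne_zero_of_mul hD)
  have n3 := right_ne_zero_of_mul (right_ne_zero_of_mul hD)
  generalize ∏ j ∈ Ico k N, ((1 - p ^ (2 * (j + 1))) * ee (p ^ (2 * (j + 1))) 2) = q1 at *
  generalize Po (p ^ 2) (p ^ 2) k ^ 3 = q2 at *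
  generalize Po (s ^ 2) (p ^ 2) k ^ 3 = q3 at *
  generalize (p ^ (k ^ 2 + 2 * k) * s⁻¹ ^ (2 * k)) = q4 at *
  field_simp

lemma sum_right {p s : K} (N : ℕ) (hD : DR p s N ≠ 0) :
    ∑ k ∈ range (N + 1), Po (s ^ 2) (p ^ 2) k ^ 2 * Po p (p ^ 2) k /
      (Po (p ^ 2) (p ^ 2) k * Po (p * s) (p ^ 2) k * Po (p ^ 2 * s) (p ^ 2) k) *
      (p ^ (2 * k) * s⁻¹ ^ (2 * k)) =
    AR p s s⁻¹ N 2 / DR p s N := by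
  rw [AR, sum_div]
  refine sum_congr rfl fun k hk => ?_
  have hkN : k ≤ N := Nat.lt_succ_iff.mp (mem_range.mp hk)
  have hsplit := prod_range_mul_prod_Ico
    (fun j => (1 - p ^ (2 * (j + 1))) * ((1 - s * p ^ (2 * j + 1)) *
      (1 - s * p ^ (2 * j + 2)))) hkN
  rw [DR, ← hsplit] at hD
  rw [DR, ← hsplit]
  have e1 : ∏ j ∈ range k, ee (s ^ 2 * p ^ (2 * j)) 2 * (1 - p ^ (2 * j + 1)) =
      Po (s ^ 2) (p ^ 2) k ^ 2 * Po p (p ^ 2) k := by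
    rw [Po, Po, ← prod_pow, ← prod_mul_distrib]
    refine prod_congr rfl fun j _ => ?_
    simp only [ee]; ring
  have e2 := DR_po p s k
  rw [DR] at e2
  rw [e2] at hD
  rw [e1, e2]
  clear hsplit e2
  have n1 := left_ne_zero_of_mul hD
  have n3 := right_ne_zero_of_mul hD
  generalize ∏ j ∈ Ico k N, ((1 - p ^ (2 * (j + 1))) * ((1 - s * p ^ (2 * j + 1)) *
      (1 - s * p ^ (2 * j + 2)))) = q1 at *
  generalize Po (p ^ 2) (p ^ 2) k * Po (p * s) (p ^ 2) k * Po (p ^ 2 * s) (p ^ 2) k = q2 at *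
  generalize Po (s ^ 2) (p ^ 2) k ^ 2 * Po p (p ^ 2) k = q3 at *
  generalize (p ^ (2 * k) * s⁻¹ ^ (2 * k)) = q4 at *
  field_simp

end fieldsums

section subring

/-- rational functions with denominator coprime to `m` -/
def RR (m : ℚ[X]) : Subring (RatFunc ℚ) where
  carrier := {f | ∃ g h : ℚ[X], IsCoprime h m ∧ h ≠ 0 ∧
    f * algebraMap ℚ[X] (RatFunc ℚ) h = algebraMap ℚ[X] (RatFunc ℚ) g}
  mul_mem' := by
    rintro a b ⟨g, h, h1, h2, h3⟩ ⟨g', h', h1', h2', h3'⟩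
    refine ⟨g * g', h * h', h1.mul_left h1', mul_ne_zero h2 h2', ?_⟩
    rw [map_mul, map_mul, ← h3, ← h3']; ring
  one_mem' := ⟨1, 1, isCoprime_one_left, one_ne_zero, by simp⟩
  add_mem' := by
    rintro a b ⟨g, h, h1, h2, h3⟩ ⟨g', h', h1', h2', h3'⟩
    refine ⟨g * h' + g' * h, h * h', h1.mul_left h1', mul_ne_zero h2 h2', ?_⟩
    rw [map_mul, map_add, map_mul, map_mul, ← h3, ← h3']; ring
  zero_mem' := ⟨0, 1, isCoprime_one_left, one_ne_zero, by simp⟩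
  neg_mem' := by
    rintro a ⟨g, h, h1, h2, h3⟩
    exact ⟨-g, h, h1, h2, by rw [map_neg, ← h3]; ring⟩

lemma RR_alg (m g : ℚ[X]) : algebraMap ℚ[X] (RatFunc ℚ) g ∈ RR m :=
  ⟨g, 1, isCoprime_one_left, one_ne_zero, by simp⟩

lemma RR_inv (m h : ℚ[X]) (hc : IsCoprime h m) (h0 : h ≠ 0) :
    (algebraMap ℚ[X] (RatFunc ℚ) h)⁻¹ ∈ RR m := by
  refine ⟨1, h, hc, h0, ?_⟩
  rw [inv_mul_cancel₀, map_one]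
  simpa using h0

lemma RX_zpow_ne {a : ℤ} (ha : a ≠ 0) : (RatFunc.X : RatFunc ℚ) ^ a ≠ 1 := by
  have key : ∀ b : ℕ, b ≠ 0 → (RatFunc.X : RatFunc ℚ) ^ b ≠ 1 := by
    intro b hb h
    rw [← RatFunc.algebraMap_X, ← map_pow, ← map_one (algebraMap ℚ[X] (RatFunc ℚ))] at h
    have := RatFunc.algebraMap_injective ℚ h
    have := congrArg natDegree this
    simp at this
    exact hb this
  obtain ⟨b, rfl | rfl⟩ := a.eq_nat_or_neg
  · rw [zpow_natCast]; exact key b (by simpa using ha)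
  · rw [zpow_neg, zpow_natCast, Ne, inv_eq_one]; exact key b (by simpa using ha)

lemma final_dvd (m A P5 : ℚ[X]) (hA : A ∣ P5) (hco : ∀ h, IsCoprime h m → IsCoprime A h)
    (F ρ : RatFunc ℚ) (hρ : ρ ∈ RR m) (hF : F = algebraMap ℚ[X] (RatFunc ℚ) P5 * ρ) :
    A ∣ F.num := by
  obtain ⟨g, h, h1, h2, h3⟩ := hρ
  have hd : algebraMap ℚ[X] (RatFunc ℚ) F.denom ≠ 0 := by
    simpa using F.denom_ne_zero
  have e : F * algebraMap ℚ[X] (RatFunc ℚ) F.denom = algebraMap ℚ[X] (RatFunc ℚ) F.num := by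
    exact (eq_div_iff hd).mp (RatFunc.num_div_denom F).symm
  have e2 : F.num * h = P5 * (g * F.denom) := by
    apply RatFunc.algebraMap_injective ℚ
    simp only [map_mul]
    rw [← e, ← h3]
    linear_combination (algebraMap ℚ[X] (RatFunc ℚ) h *
      algebraMap ℚ[X] (RatFunc ℚ) F.denom) * hF
  have : A ∣ F.num * h := e2 ▸ hA.mul_right _
  exact (hco h h1).dvd_of_dvd_mul_right this

lemma cyc_coprime {n : ℕ} (hpos : 0 < n) (hodd : Odd n) (a : ℕ) (ha : ¬ n ∣ a) :
    IsCoprime (cyclotomic n ℚ) (1 - X ^ (2 * a) : ℚ[X]) := by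
  rw [(cyclotomic.irreducible_rat hpos).coprime_iff_not_dvd]
  intro hdiv
  have hz := Complex.isPrimitiveRoot_exp n hpos.ne'
  set z := Complex.exp (2 * Real.pi * Complex.I / n)
  obtain ⟨c, hc⟩ := hdiv
  have h0 : aeval z (cyclotomic n ℚ) = 0 := by
    have := hz.isRoot_cyclotomic hpos
    rw [← map_cyclotomic n (algebraMap ℚ ℂ)] at this
    rw [aeval_def, ← eval_map]
    exact this
  have h1 := congrArg (aeval z) hc
  rw [map_mul, h0, zero_mul] at h1
  simp only [map_sub, map_one, map_pow, aeval_X] at h1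
  have h2 : z ^ (2 * a) = 1 := by linear_combination -h1
  have h3 := hz.dvd_of_pow_eq_one _ h2
  exact ha ((Nat.Coprime.dvd_of_dvd_mul_left (by simpa using hodd) h3))

lemma cyc_coprime_X {n : ℕ} (hpos : 0 < n) : IsCoprime (cyclotomic n ℚ) (X : ℚ[X]) := by
  have h1 : IsCoprime (X ^ n - 1 : ℚ[X]) X := by
    refine ⟨-1, X ^ (n - 1), ?_⟩
    rw [← pow_succ, Nat.sub_add_cancel hpos]; ring
  exact h1.of_isCoprime_of_dvd_left (cyclotomic.dvd_X_pow_sub_one n ℚ)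

end subring

section mainpart

/-- the modulus -/
noncomputable def mm (n : ℕ) : ℚ[X] := cyclotomic n ℚ * (cyclotomic n ℚ).comp (-X)

lemma comp_cop {f g : ℚ[X]} (h : IsCoprime f g) : IsCoprime (f.comp (-X)) (g.comp (-X)) := by
  have := h.map (compRingHom (-X : ℚ[X]))
  simpa using this

lemma mm_cop_pow {n : ℕ} (hpos : 0 < n) (hodd : Odd n) (a : ℕ) (ha : ¬ n ∣ a) :
    IsCoprime (1 - X ^ (2 * a) : ℚ[X]) (mm n) := by
  have h1 := cyc_coprime hpos hodd a ha
  have h2 := comp_cop h1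
  have e : (1 - X ^ (2 * a) : ℚ[X]).comp (-X) = 1 - X ^ (2 * a) := by
    simp [pow_mul]
  rw [e] at h2
  exact h1.symm.mul_right h2.symm

lemma mm_cop_X {n : ℕ} (hpos : 0 < n) : IsCoprime (X : ℚ[X]) (mm n) := by
  have h1 := cyc_coprime_X hpos
  have h2 := comp_cop h1
  rw [X_comp] at h2
  exact h1.symm.mul_right ((IsCoprime.neg_right_iff _ _).mp h2).symm

lemma X_mem (n : ℕ) (hpos : 0 < n) (a : ℤ) : (RatFunc.X : RatFunc ℚ) ^ a ∈ RR (mm n) := by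
  have hX : (RatFunc.X : RatFunc ℚ) ∈ RR (mm n) := by
    rw [← RatFunc.algebraMap_X]; exact RR_alg _ _
  have hX' : (RatFunc.X : RatFunc ℚ)⁻¹ ∈ RR (mm n) := by
    rw [← RatFunc.algebraMap_X]; exact RR_inv _ _ (mm_cop_X hpos) X_ne_zero
  obtain ⟨b, rfl | rfl⟩ := a.eq_nat_or_neg
  · rw [zpow_natCast]; exact pow_mem hX b
  · rw [zpow_neg, zpow_natCast, ← inv_pow]; exact pow_mem hX' b

lemma inv_mem_pow {n : ℕ} (hpos : 0 < n) (hodd : Odd n) (a : ℤ) (ha : ¬ (n : ℤ) ∣ a) :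
    (1 - (RatFunc.X : RatFunc ℚ) ^ (2 * a))⁻¹ ∈ RR (mm n) := by
  have key : ∀ b : ℕ, ¬ n ∣ b → (1 - (RatFunc.X : RatFunc ℚ) ^ (2 * b))⁻¹ ∈ RR (mm n) := by
    intro b hb
    have hb0 : b ≠ 0 := by rintro rfl; exact hb (dvd_zero n)
    have := RR_inv _ _ (mm_cop_pow hpos hodd b hb) (by
      intro h
      have h' : (X ^ (2 * b) : ℚ[X]) = 1 := by linear_combination -h
      have := congrArg natDegree h'
      simp at this
      exact hb0 this)
    simpa using this
  obtain ⟨b, rfl | rfl⟩ := a.eq_nat_or_neg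
  · have := key b (by exact_mod_cast ha)
    exact_mod_cast this
  · have h1 := key b (by rw [Int.dvd_neg] at ha; exact_mod_cast ha)
    have h2 := X_mem n hpos (2 * b)
    have e : (1 - (RatFunc.X : RatFunc ℚ) ^ (2 * -(b : ℤ)))⁻¹ =
        - (RatFunc.X ^ (2 * (b : ℤ)) * (1 - (RatFunc.X : RatFunc ℚ) ^ (2 * b))⁻¹) := by
      have hx : (RatFunc.X : RatFunc ℚ) ^ (2 * b) ≠ 0 := pow_ne_zero _ RatFunc.X_ne_zero
      have e1 : (RatFunc.X : RatFunc ℚ) ^ (2 * -(b : ℤ)) = (RatFunc.X ^ (2 * b))⁻¹ := by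
        rw [mul_neg, zpow_neg]; norm_cast
      have e2 : (RatFunc.X : RatFunc ℚ) ^ (2 * (b : ℤ)) = RatFunc.X ^ (2 * b) := by norm_cast
      rw [e1, e2]
      have e3 : (1 - (RatFunc.X ^ (2 * b) : RatFunc ℚ)⁻¹) =
          - ((RatFunc.X ^ (2 * b))⁻¹ * (1 - RatFunc.X ^ (2 * b))) := by
        field_simp; ring
      rw [e3, inv_neg, mul_inv, inv_inv]
    rw [e]
    exact neg_mem (mul_mem h2 h1)

lemma inv_mem_sub {n : ℕ} (hpos : 0 < n) (hodd : Odd n) (a : ℤ) (ha : ¬ (n : ℤ) ∣ a) :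
    (1 - (RatFunc.X : RatFunc ℚ) ^ a)⁻¹ ∈ RR (mm n) ∧
    (1 + (RatFunc.X : RatFunc ℚ) ^ a)⁻¹ ∈ RR (mm n) := by
  have h1 := inv_mem_pow hpos hodd a ha
  have ha0 : 2 * a ≠ 0 := by rintro h; apply ha; simp at h; simp [h]
  have hne := RX_zpow_ne ha0
  have e : (1 - (RatFunc.X : RatFunc ℚ) ^ (2 * a)) =
      (1 - RatFunc.X ^ a) * (1 + RatFunc.X ^ a) := by
    rw [two_mul, zpow_add₀ RatFunc.X_ne_zero]; ring
  have hn : (1 - (RatFunc.X : RatFunc ℚ) ^ (2 * a)) ≠ 0 := fun h => hne (sub_eq_zero.mp h).symm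
  rw [e] at hn h1
  have n1 := left_ne_zero_of_mul hn
  have n2 := right_ne_zero_of_mul hn
  have hX := X_mem n hpos a
  constructor
  · have : (1 - (RatFunc.X : RatFunc ℚ) ^ a)⁻¹ = (1 + RatFunc.X ^ a) *
        ((1 - RatFunc.X ^ a) * (1 + RatFunc.X ^ a))⁻¹ := by field_simp
    rw [this]; exact mul_mem (add_mem (one_mem _) hX) h1
  · have : (1 + (RatFunc.X : RatFunc ℚ) ^ a)⁻¹ = (1 - RatFunc.X ^ a) *
        ((1 - RatFunc.X ^ a) * (1 + RatFunc.X ^ a))⁻¹ := by field_simp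
    rw [this]; exact mul_mem (sub_mem (one_mem _) hX) h1

lemma two_inv_mem (m : ℚ[X]) : (2 : RatFunc ℚ)⁻¹ ∈ RR m := by
  have := RR_alg m (C (1 / 2))
  convert this using 1
  rw [inv_eq_iff_eq_inv, eq_comm, inv_eq_iff_eq_inv, eq_comm]
  apply inv_eq_of_mul_eq_one_right
  rw [← map_ofNat (algebraMap ℚ[X] (RatFunc ℚ)) 2, ← map_mul, ← map_ofNat (C : ℚ →+* ℚ[X]) 2,
    ← C_mul]
  norm_num

/-- abstract form of the main congruence -/
lemma core (m : ℚ[X]) (p s : RatFunc ℚ) (N : ℕ) (hN : 0 < N) (hp0 : p ≠ 0) (hs0 : s ≠ 0)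
    (hp : p ∈ RR m) (hpi : p⁻¹ ∈ RR m) (hs : s ∈ RR m) (hsi : s⁻¹ ∈ RR m)
    (h1 : ∀ i : ℕ, p ^ (i + 1) ≠ 1) (h3 : ∀ i : ℕ, s ^ 2 * p ^ (2 * i) ≠ 1)
    (g1 : (1 - s ^ 2)⁻¹ ∈ RR m) (g2 : (1 + s)⁻¹ ∈ RR m)
    (g3 : ∀ j < N, (1 - p ^ (2 * (j + 1)))⁻¹ ∈ RR m)
    (g4 : ∀ i ∈ (range (2 * N)).erase (N - 1), (1 - s * p ^ (i + 1))⁻¹ ∈ RR m) :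
    ∃ ρ ∈ RR m,
      ∑ k ∈ range (N + 1), (-1) ^ k * ((1 + s * p ^ (2 * k)) * Po (s ^ 2) (p ^ 2) k ^ 3) /
      ((1 + s) * Po (p ^ 2) (p ^ 2) k ^ 3) * (p ^ (k ^ 2 + 2 * k) * s⁻¹ ^ (2 * k)) -
      (-1) ^ N * ((1 - (s * p ^ N) ^ 2) / (1 - s ^ 2)) * (s * p ^ N * s * p⁻¹) ^ N *
      ∑ k ∈ range (N + 1), Po (s ^ 2) (p ^ 2) k ^ 2 * Po p (p ^ 2) k /
      (Po (p ^ 2) (p ^ 2) k * Po (p * s) (p ^ 2) k * Po (p ^ 2 * s) (p ^ 2) k) *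
      (p ^ (2 * k) * s⁻¹ ^ (2 * k)) =
      (1 + s * p ^ N) * (1 - (s * p ^ N) ^ 2) ^ 2 * ρ := by
  have hs1 : 1 - s ^ 2 ≠ 0 := fun h => h3 0 (by linear_combination -h)
  have hs2 : 1 + s ≠ 0 := fun h => hs1 (by linear_combination (1 - s) * h)
  have hpj : ∀ j : ℕ, 1 - p ^ (2 * (j + 1)) ≠ 0 := fun j h => h1 (2 * j + 1) (by
    rw [show 2 * j + 1 + 1 = 2 * (j + 1) by ring]; linear_combination -h)
  have hsj : ∀ j : ℕ, 1 - s * p ^ j ≠ 0 := fun j h => h3 j (by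
    have : s * p ^ j = 1 := by linear_combination -h
    calc s ^ 2 * p ^ (2 * j) = (s * p ^ j) ^ 2 := by ring
      _ = 1 := by rw [this, one_pow])
  have hDL : DL p s N 2 ≠ 0 := by
    rw [DL_two, Po]
    refine mul_ne_zero hs2 (pow_ne_zero _ (prod_ne_zero_iff.mpr fun j _ => ?_))
    have e : 1 - p ^ 2 * (p ^ 2) ^ j = 1 - p ^ (2 * (j + 1)) := by ring
    rw [e]; exact hpj j
  have hDR' : DR' p s N ≠ 0 :=
    mul_ne_zero (prod_ne_zero_iff.mpr fun j _ => hpj j) (prod_ne_zero_iff.mpr fun j _ => hsj _)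
  have hDR : DR p s N ≠ 0 := by
    rw [DR_eq p s N hN]; exact mul_ne_zero (hsj N) hDR'
  have iDL : (DL p s N 2)⁻¹ ∈ RR m := by
    rw [DL_two, Po, mul_inv, ← inv_pow, ← prod_inv_distrib]
    refine mul_mem g2 (pow_mem (prod_mem fun j hj => ?_) 3)
    have e : 1 - p ^ 2 * (p ^ 2) ^ j = 1 - p ^ (2 * (j + 1)) := by ring
    rw [e]; exact g3 j (mem_range.mp hj)
  have iDR' : (DR' p s N)⁻¹ ∈ RR m := by
    rw [DR', mul_inv, ← prod_inv_distrib, ← prod_inv_distrib]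
    exact mul_mem (prod_mem fun j hj => g3 j (mem_range.mp hj)) (prod_mem fun i hi => g4 i hi)
  rw [sum_left N hDL, sum_right N hDR, DR_eq p s N hN]
  have hk := key_dvd (RR m).subtype Subtype.val_injective ⟨p, hp⟩ ⟨p⁻¹, hpi⟩ ⟨s, hs⟩ ⟨s⁻¹, hsi⟩ N hN
    (Subtype.ext (mul_inv_cancel₀ hp0)) (Subtype.ext (mul_inv_cancel₀ hs0))
    (IsUnit.of_mul_eq_one ⟨2⁻¹, two_inv_mem m⟩ (Subtype.ext (by
      show (2 : RatFunc ℚ) * 2⁻¹ = 1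
      norm_num))) h1 h3
  obtain ⟨t, ht⟩ := hk
  have ht' := congrArg (RR m).subtype ht
  have h2m : (RR m).subtype 2 = 2 := rfl
  simp only [map_sub, map_mul, map_AL, map_AR, map_DL, map_DR', map_add, map_one, map_pow, map_neg,
    Subring.subtype_apply, h2m] at ht'
  refine ⟨t * ((DL p s N 2)⁻¹ * (1 - s ^ 2)⁻¹ * (DR' p s N)⁻¹),
    mul_mem t.2 (mul_mem (mul_mem iDL g1) iDR'), ?_⟩
  have hw := hsj N
  rw [← mul_assoc, ← ht']
  generalize hw' : s * p ^ N = w at *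
  have e : (1 - w ^ 2) / (1 - s ^ 2) = (1 - w) * (1 + w) / (1 - s ^ 2) := by ring
  rw [e]
  generalize AL p s s⁻¹ N 2 = A1 at *
  generalize AR p s s⁻¹ N 2 = A2 at *
  generalize DL p s N 2 = D1 at *
  generalize DR' p s N = D2 at *
  generalize (w * s * p⁻¹) ^ N = c at *
  generalize 1 - s ^ 2 = D3 at *
  generalize (-1 : RatFunc ℚ) ^ N = sg at *
  clear ht ht'
  field_simp
end mainpart

theorem stmt2 (n d : ℕ) (r : ℤ) (hpos : 0 < n) (hodd : Odd n) (hd : 0 < d)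
    (hgcd : Nat.gcd n d = 1)
    (hr1 : (n : ℤ) - d * n + d ≤ r) (hr2 : r ≤ (n : ℤ))
    (hnr : (n : ℤ) ≡ r [ZMOD (d : ℤ)]) :
    ((cyclotomic n ℚ).comp (-X)) ^ 3 * (cyclotomic n ℚ) ^ 2 ∣
      RatFunc.num
        ((∑ k ∈ Finset.range ((((n : ℤ) - r) / d).toNat + 1),
            (-1 : RatFunc ℚ) ^ k *
              ((1 + RatFunc.X ^ (2 * (d : ℤ) * k + r)) *
                qPoch (RatFunc.X ^ (2 * r)) (RatFunc.X ^ (2 * (d : ℤ))) k ^ 3) /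
              ((1 + RatFunc.X ^ r) *
                qPoch (RatFunc.X ^ (2 * (d : ℤ))) (RatFunc.X ^ (2 * (d : ℤ))) k ^ 3) *
              RatFunc.X ^ ((d : ℤ) * (k : ℤ) ^ 2 + 2 * (k : ℤ) * ((d : ℤ) - r))) -
          (-1 : RatFunc ℚ) ^ (((n : ℤ) - r) / d).toNat *
            (qInt (RatFunc.X ^ (2 : ℤ)) (n : ℤ) / qInt (RatFunc.X ^ (2 : ℤ)) r) *
            RatFunc.X ^ (((n : ℤ) - r) * ((n : ℤ) + r - d) / d) *
            ∑ k ∈ Finset.range ((((n : ℤ) - r) / d).toNat + 1),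
              qPoch (RatFunc.X ^ (2 * r)) (RatFunc.X ^ (2 * (d : ℤ))) k ^ 2 *
                qPoch (RatFunc.X ^ (d : ℤ)) (RatFunc.X ^ (2 * (d : ℤ))) k /
                (qPoch (RatFunc.X ^ (2 * (d : ℤ))) (RatFunc.X ^ (2 * (d : ℤ))) k *
                  qPoch (RatFunc.X ^ ((d : ℤ) + r)) (RatFunc.X ^ (2 * (d : ℤ))) k *
                  qPoch (RatFunc.X ^ (2 * (d : ℤ) + r)) (RatFunc.X ^ (2 * (d : ℤ))) k) *
                RatFunc.X ^ (2 * (k : ℤ) * ((d : ℤ) - r))) := by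
  have hx : (RatFunc.X : RatFunc ℚ) ≠ 0 := RatFunc.X_ne_zero
  have hd0 : (d : ℤ) ≠ 0 := by exact_mod_cast hd.ne'
  have hdpos : (0 : ℤ) < d := by exact_mod_cast hd
  have hnpos : (0 : ℤ) < n := by exact_mod_cast hpos
  obtain ⟨N', hN'⟩ : (d : ℤ) ∣ (n : ℤ) - r := hnr.symm.dvd
  have hN0 : 0 ≤ N' := by
    by_contra h
    push Not at h
    nlinarith
  obtain ⟨N, rfl⟩ := Int.eq_ofNat_of_zero_le hN0
  have hr : r = n - d * N := by linarith
  have hNn : N < n := by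
    have h1 : (d : ℤ) * N ≤ d * ((n : ℤ) - 1) := by linarith
    have h2 := le_of_mul_le_mul_left h1 hdpos
    omega
  have eN : (((n : ℤ) - r) / d).toNat = N := by
    rw [hN', Int.mul_ediv_cancel_left _ hd0]; simp
  have eP : ((n : ℤ) - r) * ((n : ℤ) + r - d) / d = N * ((n : ℤ) + r - d) := by
    rw [hN', mul_assoc, Int.mul_ediv_cancel_left _ hd0]
  rw [eN, eP]
  have hXn : ∀ a : ℤ, a ≠ 0 → (1 - (RatFunc.X : RatFunc ℚ) ^ a) ≠ 0 := fun a ha h =>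
    RX_zpow_ne ha (sub_eq_zero.mp h).symm
  have x2 : ∀ a : ℤ, ((RatFunc.X : RatFunc ℚ) ^ (2 : ℤ)) ^ a = RatFunc.X ^ (2 * a) :=
    fun a => (zpow_mul _ _ _).symm
  have hX2 : (1 - (RatFunc.X : RatFunc ℚ) ^ (2 : ℤ)) ≠ 0 := hXn 2 (by norm_num)
  have hnd : ∀ t : ℤ, (n : ℤ) ∣ d * t → -(n : ℤ) < t → t < n → t = 0 := by
    intro t h h1 h2
    have hc : IsCoprime (n : ℤ) (d : ℤ) := Nat.isCoprime_iff_coprime.mpr hgcd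
    obtain ⟨c, rfl⟩ := hc.dvd_of_dvd_mul_left h
    have : c = 0 := by
      by_contra hc0
      rcases lt_or_gt_of_ne hc0 with h' | h'
      · nlinarith
      · nlinarith
    simp [this]
  rcases Nat.eq_zero_or_pos N with hz | hNpos
  · subst hz
    have hrn : r = n := by rw [hr]; simp
    subst hrn
    have q1 : 1 + (RatFunc.X : RatFunc ℚ) ^ (n : ℤ) ≠ 0 := by
      intro h
      apply hXn (2 * (n : ℤ)) (by omega)
      rw [two_mul, zpow_add₀ hx]
      linear_combination (1 - (RatFunc.X : RatFunc ℚ) ^ (n : ℤ)) * h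
    have q2 : qInt ((RatFunc.X : RatFunc ℚ) ^ (2 : ℤ)) n ≠ 0 := by
      rw [qInt, x2]
      exact div_ne_zero (hXn _ (by omega)) hX2
    simp only [zero_add, range_one, sum_singleton, qPoch, range_zero, prod_empty, pow_zero,
      Nat.cast_zero, mul_zero, zero_mul, zpow_zero, one_pow, mul_one, one_mul, div_self q1,
      div_self q2, ne_eq, OfNat.ofNat_ne_zero, not_false_eq_true, zero_pow, add_zero, div_one,
      sub_self, RatFunc.num_zero, dvd_zero]
  -- the main case
  have hn1 : (1 : ℤ) < n := by omega
  have ndr : ∀ i : ℤ, -(n : ℤ) < i - N → i - N < n → i ≠ N → ¬ (n : ℤ) ∣ r + d * i := by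
    intro i h1 h2 h3 h
    have : (n : ℤ) ∣ d * (i - N) := by
      have := dvd_sub h (dvd_refl (n : ℤ))
      have e : r + d * i - n = d * (i - N) := by rw [hr]; ring
      rwa [e] at this
    have := hnd _ this h1 h2
    omega
  set x : RatFunc ℚ := RatFunc.X with hxdef
  set p : RatFunc ℚ := x ^ (d : ℤ) with hp
  set s : RatFunc ℚ := x ^ r with hs
  have pk : ∀ k : ℕ, p ^ k = x ^ ((d : ℤ) * k) := fun k => by
    rw [hp, ← zpow_natCast, ← zpow_mul]
  have spk : ∀ k : ℕ, s * p ^ k = x ^ (r + (d : ℤ) * k) := fun k => by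
    rw [pk, hs, zpow_add₀ hx]
  have s2 : s ^ 2 = x ^ (2 * r) := by
    rw [hs, ← zpow_natCast, ← zpow_mul]; congr 1; push_cast; ring
  have sik : ∀ k : ℕ, s⁻¹ ^ (2 * k) = x ^ (-(2 * k * r)) := fun k => by
    rw [hs, ← zpow_neg, ← zpow_natCast, ← zpow_mul]; congr 1; push_cast; ring
  have hw : s * p ^ N = x ^ (n : ℤ) := by
    rw [spk]; congr 1; rw [hr]; ring
  obtain ⟨ρ, hρ, hF⟩ := core (mm n) p s N hNpos (zpow_ne_zero _ hx) (zpow_ne_zero _ hx)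
    (X_mem n hpos _) (by rw [hp, ← zpow_neg]; exact X_mem n hpos _)
    (X_mem n hpos _) (by rw [hs, ← zpow_neg]; exact X_mem n hpos _)
    (by
      intro i
      rw [pk]
      exact RX_zpow_ne (mul_ne_zero hd0 (by push_cast; omega)))
    (by
      intro i
      have : s ^ 2 * p ^ (2 * i) = x ^ (2 * (r + d * i)) := by
        rw [s2, pk, ← zpow_add₀ hx]; congr 1; push_cast; ring
      rw [this]
      apply RX_zpow_ne
      intro h0
      have h0' : (n : ℤ) = d * ((N : ℤ) - i) := by rw [hr] at h0; linarith
      have h1 : (0 : ℤ) < (N : ℤ) - i := by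
        by_contra hcon
        push Not at hcon
        nlinarith
      have := hnd ((N : ℤ) - i) ⟨1, by rw [← h0']; ring⟩ (by omega) (by omega)
      omega)
    (by
      rw [s2]
      apply inv_mem_pow hpos hodd
      have := ndr 0 (by omega) (by omega) (by omega)
      simpa using this)
    (by
      refine (inv_mem_sub hpos hodd r ?_).2
      have := ndr 0 (by omega) (by omega) (by omega)
      simpa using this)
    (by
      intro j hj
      have : p ^ (2 * (j + 1)) = x ^ (2 * ((d : ℤ) * (j + 1))) := by
        rw [pk]; congr 1; push_cast; ring
      rw [this]
      apply inv_mem_pow hpos hodd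
      intro h
      have := hnd _ h (by omega) (by omega)
      omega)
    (by
      intro i hi
      rw [mem_erase, mem_range] at hi
      rw [spk]
      refine (inv_mem_sub hpos hodd _ ?_).1
      apply ndr
      all_goals push_cast
      all_goals omega)
  refine final_dvd (mm n) _ ((1 + X ^ n) * (1 - (X ^ n) ^ 2) ^ 2) ?_ ?_ _ ρ hρ ?_
  · have h1 : cyclotomic n ℚ ∣ X ^ n - 1 := cyclotomic.dvd_X_pow_sub_one n ℚ
    have h2 : (cyclotomic n ℚ).comp (-X) ∣ 1 + X ^ n := by
      obtain ⟨c, hc⟩ := h1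
      refine ⟨-c.comp (-X), ?_⟩
      have := congrArg (fun f : ℚ[X] => f.comp (-X)) hc
      simp only [sub_comp, pow_comp, X_comp, one_comp, mul_comp, hodd.neg_pow] at this
      linear_combination -this
    have e : ((1 + X ^ n) * (1 - (X ^ n) ^ 2) ^ 2 : ℚ[X]) =
        (1 + X ^ n) ^ 3 * (X ^ n - 1) ^ 2 := by ring
    rw [e]
    exact mul_dvd_mul (pow_dvd_pow_of_dvd h2 3) (pow_dvd_pow_of_dvd h1 2)
  · intro h hh
    have h1 := hh.of_mul_right_left
    have h2 := hh.of_mul_right_right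
    exact (h2.symm.pow_left).mul_left (h1.symm.pow_left)
  have eA : algebraMap ℚ[X] (RatFunc ℚ) ((1 + X ^ n) * (1 - (X ^ n) ^ 2) ^ 2) =
      (1 + s * p ^ N) * (1 - (s * p ^ N) ^ 2) ^ 2 := by
    rw [hw, zpow_natCast]
    simp [hxdef]
  rw [eA, ← hF]
  have p2 : x ^ (2 * (d : ℤ)) = p ^ 2 := by rw [pk]; congr 1; push_cast; ring
  have hr0 : r ≠ 0 := by
    intro h
    have := ndr 0 (by omega) (by omega) (by omega)
    simp [h] at this
  congr 1
  · refine sum_congr rfl fun k _ => ?_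
    have e1 : x ^ (2 * (d : ℤ) * k + r) = s * p ^ (2 * k) := by
      rw [spk]; congr 1; push_cast; ring
    have e2 : x ^ ((d : ℤ) * (k : ℤ) ^ 2 + 2 * (k : ℤ) * ((d : ℤ) - r)) =
        p ^ (k ^ 2 + 2 * k) * s⁻¹ ^ (2 * k) := by
      rw [pk, sik, ← zpow_add₀ hx]; congr 1; push_cast; ring
    rw [e1, e2, p2, ← s2]
    rfl
  · have e3 : qInt (x ^ (2 : ℤ)) (n : ℤ) / qInt (x ^ (2 : ℤ)) r =
        (1 - (s * p ^ N) ^ 2) / (1 - s ^ 2) := by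
      have : (s * p ^ N) ^ 2 = x ^ (2 * (n : ℤ)) := by
        rw [hw, ← zpow_natCast, ← zpow_mul]; congr 1; push_cast; ring
      rw [this, s2, qInt, qInt, x2, x2, div_div_div_cancel_right₀ hX2]
    have e4 : x ^ ((N : ℤ) * ((n : ℤ) + r - d)) = (s * p ^ N * s * p⁻¹) ^ N := by
      rw [hw, hs, hp, ← zpow_neg, ← zpow_add₀ hx, ← zpow_add₀ hx, ← zpow_natCast, ← zpow_mul]
      congr 1; ring
    rw [e3, e4]
    congr 1
    refine sum_congr rfl fun k _ => ?_
    have e1 : x ^ ((d : ℤ) + r) = p * s := by rw [zpow_add₀ hx]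
    have e2 : x ^ (2 * (d : ℤ) + r) = p ^ 2 * s := by rw [zpow_add₀ hx, p2]
    have e5 : x ^ (2 * (k : ℤ) * ((d : ℤ) - r)) = p ^ (2 * k) * s⁻¹ ^ (2 * k) := by
      rw [pk, sik, ← zpow_add₀ hx]; congr 1; push_cast; ring
    rw [e1, e2, e5, p2, ← s2]
    rfl
end

section
/- Let p be a prime with p ≡ 2 (mod 3) (and p odd). Then Σ_{k=0}^{(p+1)/3} (−1)^k (−1/3)_k^3 / k!^3 ≡ −(−1)^{(p+1)/3} · p · Σ_{k=0}^{(p+1)/3} (−1/3)_k^2 (1/2)_k / (k! (1/3)_k (5/6)_k) (mod p^2). -/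
open Finset

/-- The Pochhammer symbol `(a)_k = a(a+1)⋯(a+k-1)` for rational `a`. -/
def poch (a : ℚ) (k : ℕ) : ℚ := ∏ j ∈ Finset.range k, (a + j)

theorem poch_succ (x : ℚ) (n : ℕ) : poch x (n+1) = poch x n * (x + n) := by
  simp [poch, Finset.prod_range_succ]

theorem poch_zero (x : ℚ) : poch x 0 = 1 := by simp [poch]

theorem poch_add (x : ℚ) (m n : ℕ) : poch x (m+n) = poch x m * poch (x+m) n := by
  simp [poch, Finset.prod_range_add, add_assoc]

theorem poch_succ' (x : ℚ) (n : ℕ) : poch x (n+1) = x * poch (x+1) n := by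
  rw [add_comm, poch_add]; simp [poch]

theorem poch_ne (x : ℚ) (n : ℕ) (h : ∀ j : ℕ, x + j ≠ 0) : poch x n ≠ 0 :=
  Finset.prod_ne_zero_iff.2 fun j _ => h j

theorem vander (N : ℕ) : ∀ c D : ℚ, poch (c - D) N =
    ∑ i ∈ range (N+1), (N.choose i : ℚ) * ((-1)^i * poch D i * poch (c+i) (N-i)) := by
  induction N with
  | zero => intro c D; simp [poch]
  | succ N ih =>
    intro c D
    rw [Finset.sum_choose_succ_mul (fun i m => (-1)^i * poch D i * poch (c+i) m),
      poch_succ', show c - D + 1 = (c+1) - D by ring, ih, Finset.mul_sum, ← Finset.sum_add_distrib]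
    refine Finset.sum_congr rfl fun i hi => ?_
    have hi' : i ≤ N := by simpa [Nat.lt_succ_iff] using hi
    rw [show N + 1 - i = (N - i) + 1 by omega, poch_succ' (c+i), poch_succ D]
    push_cast
    rw [show c + 1 + (i:ℚ) = c + i + 1 by ring, show c + ((i:ℚ) + 1) = c + i + 1 by ring]
    ring

theorem poch_neg (m k : ℕ) : poch (-((m + k : ℕ):ℚ)) k * (m.factorial : ℚ) = (-1)^k * ((m+k).factorial : ℚ) := by
  induction k with
  | zero => simp [poch]
  | succ k ih =>
    rw [poch_succ', show -((m + (k+1) : ℕ):ℚ) + 1 = -((m+k:ℕ):ℚ) by push_cast; ring,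
      mul_assoc, ih, ← add_assoc, Nat.factorial_succ]
    push_cast; ring

theorem poch_half (j : ℕ) : poch (1/2) j * 4^j * (j.factorial : ℚ) = ((j+j).factorial : ℚ) := by
  induction j with
  | zero => simp [poch]
  | succ j ih =>
    rw [poch_succ, show j+1+(j+1) = (j+j)+1+1 by ring, Nat.factorial_succ, Nat.factorial_succ, Nat.factorial_succ]
    push_cast
    rw [← ih]; ring

theorem poch_dup (a : ℚ) (j : ℕ) : poch (1/2+a/2) j * poch (1+a/2) j * 4^j = poch (1+a) (j+j) := by
  induction j with
  | zero => simp [poch]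
  | succ j ih =>
    rw [show j+1+(j+1) = (j+j)+1+1 by ring]
    simp only [poch_succ]
    rw [← ih]; push_cast; ring

theorem term_id (a : ℚ) (ha : -1 < a) (k i m : ℕ) (d : ℚ) :
    (-1)^k * poch a k * poch (-((k+i+m:ℕ):ℚ)) k / (k.factorial * poch (1+a+(k+i+m:ℕ)) k)
      * (((i+m).choose i : ℚ) * ((-1)^i * poch d (k+i) * poch (1+a+k+(k+i:ℕ)) m))
    = poch (1+a) (k+i+m) * poch d (k+i) * poch (-((k+i+m:ℕ):ℚ)) (k+i)
      / ((k+i).factorial * poch (1+a) ((k+i)+(k+i)))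
      * (((k+i).choose k : ℚ) * ((-1)^k * poch a k * poch (1+a+(k+i:ℕ)+k) i)) := by
  have pos : ∀ x : ℚ, 0 < x → ∀ n, poch x n ≠ 0 := fun x hx n =>
    poch_ne x n fun j => by positivity
  have h1 : (0:ℚ) < 1 + a := by linarith
  have e1 : poch (1+a) (k+i+m) * poch (1+a+(k+i+m:ℕ)) k
      = poch (1+a) (k+(k+i)) * poch (1+a+k+(k+i:ℕ)) m := by
    rw [← poch_add, show (1+a+k+(k+i:ℕ)) = (1 + a + ((k+(k+i):ℕ):ℚ)) by push_cast; ring, ← poch_add]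
    congr 1; ring
  have e2 : poch (1+a) ((k+i)+(k+i)) = poch (1+a) (k+(k+i)) * poch (1+a+(k+i:ℕ)+k) i := by
    rw [show (1+a+(k+i:ℕ)+k) = (1 + a + ((k+(k+i):ℕ):ℚ)) by push_cast; ring, ← poch_add]
    congr 1; ring
  have e3 := poch_neg (i+m) k
  have e4 := poch_neg m (k+i)
  rw [show i + m + k = k+i+m by ring] at e3
  rw [show m + (k+i) = k+i+m by ring] at e4
  have c1 : ((i+m).choose i : ℚ) = (i+m).factorial / (i.factorial * m.factorial) := by
    rw [Nat.cast_add_choose]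
  have c2 : ((k+i).choose k : ℚ) = (k+i).factorial / (k.factorial * i.factorial) := by
    rw [Nat.cast_add_choose]
  have n1 := pos (1+a+(k+i+m:ℕ)) (by positivity) k
  have n2 := pos (1+a) h1 (k+(k+i))
  have n3 := pos (1+a+(k+i:ℕ)+k) (by positivity) i
  have f := fun n : ℕ => (Nat.cast_ne_zero (R := ℚ)).2 (Nat.factorial_ne_zero n)
  have f1 := f k
  have f2 := f i
  have f3 := f m
  have f4 := f (k+i)
  have f5 := f (i+m)
  have e3' := (eq_div_iff f5).2 e3
  have e4' := (eq_div_iff f3).2 e4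
  have e1' : poch (1+a+k+(k+i:ℕ)) m = poch (1+a) (k+i+m) * poch (1+a+(k+i+m:ℕ)) k / poch (1+a) (k+(k+i)) := by
    rw [e1]; field_simp
  rw [e3', e4', e1', e2, c1, c2]
  have s : ((-1:ℚ)^k)^2 = 1 := by rw [← pow_mul, mul_comm, pow_mul]; simp
  rw [pow_add]
  field_simp

theorem main_id (n : ℕ) (a d : ℚ) (ha : -1 < a) (hd : ∀ j : ℕ, 1 + a - d + j ≠ 0) :
    (∑ k ∈ range (n+1), (-1)^k * poch a k * poch d k * poch (-(n:ℚ)) k /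
      (k.factorial * poch (1+a-d) k * poch (1+a+n) k)) * poch (1+a-d) n
    = poch (1+a) n * ∑ j ∈ range (n+1), poch (1/2) j * poch d j * poch (-(n:ℚ)) j /
      (j.factorial * poch (1/2+a/2) j * poch (1+a/2) j) := by
  set F : ℕ → ℕ → ℚ := fun k i =>
    (-1)^k * poch a k * poch (-(n:ℚ)) k / (k.factorial * poch (1+a+n) k)
      * (((n-k).choose i : ℚ) * ((-1)^i * poch d (k+i) * poch (1+a+k+(k+i:ℕ)) (n-k-i))) with hF
  have hL : ∀ k ∈ range (n+1), (-1)^k * poch a k * poch d k * poch (-(n:ℚ)) k /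
      (k.factorial * poch (1+a-d) k * poch (1+a+n) k) * poch (1+a-d) n
      = ∑ i ∈ range (n+1-k), F k i := by
    intro k hk
    have hk' : k ≤ n := by simpa [Nat.lt_succ_iff] using hk
    have hn : poch (1+a-d) n = poch (1+a-d) k * poch ((1+a+2*k) - (d+k)) (n-k) := by
      rw [show (1+a+2*k) - (d+k) = 1+a-d+(k:ℚ) by ring, ← poch_add]; congr 1; omega
    have hne := poch_ne _ k hd
    rw [hn, show n+1-k = n-k+1 by omega]
    rw [show ∀ S : ℚ, (-1)^k * poch a k * poch d k * poch (-(n:ℚ)) k /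
      (k.factorial * poch (1+a-d) k * poch (1+a+n) k) * (poch (1+a-d) k * S) =
      ((-1)^k * poch a k * poch (-(n:ℚ)) k / (k.factorial * poch (1+a+n) k)) * (poch d k * S) by
        intro S; field_simp, vander]
    rw [Finset.mul_sum, Finset.mul_sum]
    refine Finset.sum_congr rfl fun i _ => ?_
    rw [hF]
    simp only [poch_add d k i]
    rw [show 1+a+2*k+(i:ℚ) = 1+a+k+(k+i:ℕ) by push_cast; ring]
    ring
  rw [Finset.sum_mul, Finset.sum_congr rfl hL, ← Finset.sum_range_diag_flip, Finset.mul_sum]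
  refine Finset.sum_congr rfl fun j hj => ?_
  have hj' : j ≤ n := by simpa [Nat.lt_succ_iff] using hj
  have hk : ∀ k ∈ range (j+1), F k (j-k) =
      poch (1+a) n * poch d j * poch (-(n:ℚ)) j / (j.factorial * poch (1+a) (j+j))
      * ((j.choose k : ℚ) * ((-1)^k * poch a k * poch (1+a+j+k) (j-k))) := by
    intro k hk
    have hk' : k ≤ j := by simpa [Nat.lt_succ_iff] using hk
    obtain ⟨i, rfl⟩ := Nat.exists_eq_add_of_le hk'
    obtain ⟨m, rfl⟩ := Nat.exists_eq_add_of_le hj'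
    have := term_id a ha k i m d
    rw [hF]
    simp only [show k + i - k = i by omega, show k+i+m-k = i+m by omega, show i+m-i = m by omega]
    exact this
  rw [Finset.sum_congr rfl hk, ← Finset.mul_sum, ← vander]
  have hpos : poch (1+a) (j+j) ≠ 0 := poch_ne _ _ fun j => by
    have : (0:ℚ) < 1 + a := by linarith
    positivity
  have hdup := poch_dup a j
  have e : poch (1+a+j-a) j * j.factorial = ((j+j).factorial : ℚ) := by
    rw [show 1+a+(j:ℚ)-a = 1 + j by ring]
    have : ((j:ℕ).factorial : ℚ) = poch 1 j := by
      clear * -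
      induction j with
      | zero => simp [poch]
      | succ j ih => rw [poch_succ, Nat.factorial_succ, ← ih]; push_cast; ring
    have h2 : ∀ t : ℕ, (t.factorial : ℚ) = poch 1 t := by
      clear * -
      intro j
      induction j with
      | zero => simp [poch]
      | succ j ih => rw [poch_succ, Nat.factorial_succ, ← ih]; push_cast; ring
    rw [h2 (j+j), h2 j, poch_add]; ring
  have hf : (j.factorial : ℚ) ≠ 0 := Nat.cast_ne_zero.2 (Nat.factorial_ne_zero j)
  have hh := poch_half j
  have e' : poch (1+a+j-a) j = poch (1/2) j * 4^j := by
    apply mul_right_cancel₀ hf; rw [e, hh]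
  rw [e', ← hdup]
  rw [← hdup] at hpos
  have n1 : poch (1/2+a/2) j ≠ 0 := fun h => hpos (by rw [h]; ring)
  have n2 : poch (1+a/2) j ≠ 0 := fun h => hpos (by rw [h]; ring)
  field_simp

theorem poch_reflect (x : ℚ) (n : ℕ) : poch (1-x) n = (-1)^n * poch (x-n) n := by
  induction n with
  | zero => simp [poch]
  | succ n ih =>
    rw [poch_succ, ih, poch_succ', show x - ((n+1:ℕ):ℚ) + 1 = x - n by push_cast; ring]
    push_cast; ring

section padic
variable (p : ℕ) [Fact p.Prime]

/-- The `p`-adic norm of a rational number. -/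
noncomputable def nm (x : ℚ) : ℝ := ‖(x : ℚ_[p])‖

theorem nm_mul (x y : ℚ) : nm p (x*y) = nm p x * nm p y := by simp [nm]
theorem nm_div (x y : ℚ) : nm p (x/y) = nm p x / nm p y := by simp [nm]
theorem nm_nonneg (x : ℚ) : 0 ≤ nm p x := norm_nonneg _
theorem nm_prod (s : Finset ℕ) (f : ℕ → ℚ) : nm p (∏ j ∈ s, f j) = ∏ j ∈ s, nm p (f j) := by
  simp [nm]
theorem nm_int (z : ℤ) : nm p z ≤ 1 := by
  simpa [nm] using Padic.norm_int_le_one (p := p) z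
theorem nm_unit (z : ℤ) (h : ¬ (p:ℤ) ∣ z) : nm p z = 1 := by
  refine le_antisymm (nm_int p z) (not_lt.1 fun h' => h ?_)
  rw [← Padic.norm_intCast_lt_one_iff]
  simpa [nm] using h'
theorem nm_p : nm p p = (p:ℝ)⁻¹ := by simp [nm]
theorem nm_sum (s : Finset ℕ) (f : ℕ → ℚ) (C : ℝ) (hC : 0 ≤ C) (h : ∀ k ∈ s, nm p (f k) ≤ C) :
    nm p (∑ k ∈ s, f k) ≤ C := by
  unfold nm
  push_cast
  exact IsUltrametricDist.norm_sum_le_of_forall_le_of_nonneg hC h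
theorem nm_add (x y : ℚ) (C : ℝ) (hx : nm p x ≤ C) (hy : nm p y ≤ C) : nm p (x+y) ≤ C := by
  unfold nm
  push_cast
  exact (Padic.nonarchimedean _ _).trans (max_le hx hy)
theorem nm_frac (x : ℚ) (z w : ℤ) (h : ¬ (p:ℤ) ∣ w) (hx : x = z / w) : nm p x ≤ 1 := by
  rw [hx, nm_div, nm_unit p w h, div_one]; exact nm_int p z
theorem nm_frac_unit (x : ℚ) (z w : ℤ) (h : ¬ (p:ℤ) ∣ w) (hz : ¬ (p:ℤ) ∣ z) (hx : x = z / w) :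
    nm p x = 1 := by
  rw [hx, nm_div, nm_unit p w h, nm_unit p z hz, div_one]
theorem nm_frac2 (x : ℚ) (z w : ℤ) (h : ¬ (p:ℤ) ∣ w) (hx : x = p^2 * (z / w)) :
    nm p x ≤ (p:ℝ)^(-2:ℤ) := by
  rw [hx, pow_two, nm_mul, nm_mul, nm_p]
  have h1 := nm_frac p (z/w) z w h rfl
  have : (p:ℝ)^(-2:ℤ) = (p:ℝ)⁻¹ * (p:ℝ)⁻¹ := by
    rw [zpow_neg, ← mul_inv]; norm_cast; rw [pow_two]
  rw [this]
  exact mul_le_of_le_one_right (by positivity) h1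

theorem nm_prod_le (k : ℕ) (f : ℕ → ℚ) (hf : ∀ j < k, nm p (f j) ≤ 1) :
    nm p (∏ j ∈ range k, f j) ≤ 1 := by
  rw [nm_prod]
  exact Finset.prod_le_one (fun _ _ => nm_nonneg p _) fun j hj => hf j (by simpa using hj)

theorem prod_cong (C : ℝ) (hC : 0 ≤ C) (k : ℕ) (f g : ℕ → ℚ) (hf : ∀ j < k, nm p (f j) ≤ 1)
    (hg : ∀ j < k, nm p (g j) ≤ 1) (hfg : ∀ j < k, nm p (f j - g j) ≤ C) :
    nm p (∏ j ∈ range k, f j - ∏ j ∈ range k, g j) ≤ C := by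
  induction k with
  | zero => simpa [nm] using hC
  | succ k ih =>
    rw [Finset.prod_range_succ, Finset.prod_range_succ]
    have ih' := ih (fun j hj => hf j (by omega)) (fun j hj => hg j (by omega))
      (fun j hj => hfg j (by omega))
    rw [show ∀ A B x y : ℚ, A * x - B * y = (A - B) * x + B * (x - y) by intros; ring]
    apply nm_add
    · rw [nm_mul]
      exact (mul_le_of_le_one_right (nm_nonneg p _) (hf k (by omega))).trans ih'
    · rw [nm_mul]
      exact (mul_le_of_le_one_left (nm_nonneg p _)
        (nm_prod_le p k g fun j hj => hg j (by omega))).trans (hfg k (by omega))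

theorem fact_poch (t : ℕ) : (t.factorial : ℚ) = poch 1 t := by
  induction t with
  | zero => simp [poch]
  | succ j ih => rw [poch_succ, Nat.factorial_succ, ← ih]; push_cast; ring

theorem not_dvd_small (z : ℤ) (h0 : 0 < z) (h : z < p) : ¬ (p:ℤ) ∣ z := fun hd =>
  absurd (Int.le_of_dvd h0 hd) (by omega)

theorem pz : Prime (p:ℤ) := Nat.prime_iff_prime_int.1 Fact.out

theorem bound1 (n k : ℕ) (hp : 3 < p) (hn : p + 1 = 3 * n) (hk : k ≤ n) :
    nm p (((-1)^k * poch (-1/3) k ^ 3 / (k.factorial:ℚ)^3)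
      - (-1)^k * poch (-1/3) k * poch (-1/3+p/3) k * poch (-(n:ℚ)) k /
      (k.factorial * poch (1+(-1/3)-(-1/3+p/3)) k * poch (1+(-1/3)+n) k)) ≤ (p:ℝ)^(-2:ℤ) := by
  have hnq : (n:ℚ) = (p+1)/3 := by
    rw [eq_div_iff (by norm_num)]; exact_mod_cast (by omega : n * 3 = p + 1)
  have h3 : ¬ (p:ℤ) ∣ 3 := not_dvd_small p 3 (by norm_num) (by exact_mod_cast hp)
  have hB : ∀ j < k, ¬ (p:ℤ) ∣ (3*j+3) := by
    intro j hj hd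
    rw [show (3*(j:ℤ)+3) = 3*(j+1) by ring] at hd
    rcases (pz p).dvd_or_dvd hd with h | h
    · exact h3 h
    · exact not_dvd_small p _ (by omega) (by omega) h
  have hB1 : ∀ j < k, ¬ (p:ℤ) ∣ (3*j+3)^2 := fun j hj hd => hB j hj ((pz p).dvd_of_dvd_pow hd)
  have hB2 : ∀ j < k, ¬ (p:ℤ) ∣ (3*j+3)^2 - p^2 := fun j hj hd => hB1 j hj (by
    have := dvd_add hd (dvd_pow_self (p:ℤ) (two_ne_zero))
    simpa using this)
  have hne1 : ∀ j < k, ((3*j+3 : ℚ)) ≠ 0 := fun j hj => by positivity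
  have hne2 : ∀ j < k, ((3*j+3 : ℚ))^2 - p^2 ≠ 0 := fun j hj h => hB2 j hj (by
    have : ((3*j+3:ℤ))^2 - p^2 = 0 := by exact_mod_cast h
    rw [this]; simp)
  set f : ℕ → ℚ := fun j => (3*j-1)^2/(3*j+3)^2 with hf
  set g : ℕ → ℚ := fun j => ((3*j-1)^2-p^2)/((3*j+3)^2-p^2) with hg
  have key : ((-1)^k * poch (-1/3) k ^ 3 / (k.factorial:ℚ)^3)
      - (-1)^k * poch (-1/3) k * poch (-1/3+p/3) k * poch (-(n:ℚ)) k /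
      (k.factorial * poch (1+(-1/3)-(-1/3+p/3)) k * poch (1+(-1/3)+n) k)
      = ((-1)^k * poch (-1/3) k / k.factorial) * (∏ j ∈ range k, f j - ∏ j ∈ range k, g j) := by
    have e1 : ∏ j ∈ range k, f j = poch (-1/3) k ^ 2 / poch 1 k ^ 2 := by
      simp only [poch, ← Finset.prod_pow, ← Finset.prod_div_distrib]
      refine Finset.prod_congr rfl fun j hj => ?_
      have h1 := hne1 j (by simpa using hj)
      rw [hf, show (-1/3+j:ℚ) = (3*j-1)/3 by ring, show (1+j:ℚ) = (3*j+3)/3 by ring]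
      simp only
      field_simp
    have e2 : ∏ j ∈ range k, g j = poch (-1/3+p/3) k * poch (-(n:ℚ)) k /
        (poch (1+(-1/3)-(-1/3+p/3)) k * poch (1+(-1/3)+n) k) := by
      simp only [poch, ← Finset.prod_mul_distrib, ← Finset.prod_div_distrib]
      refine Finset.prod_congr rfl fun j hj => ?_
      have h1 := hne2 j (by simpa using hj)
      rw [hnq, show ((-1/3+p/3+j)*(-((p+1)/3) + j):ℚ) = ((3*j-1)^2-p^2)/9 by ring,
        show ((1+(-1/3)-(-1/3+p/3)+j)*(1+(-1/3)+((p+1)/3) + j):ℚ) = ((3*j+3)^2-p^2)/9 by ring]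
      rw [hg]
      simp only
      field_simp
    rw [e1, e2, ← fact_poch]
    simp only [div_eq_mul_inv, mul_inv]
    ring
  rw [key, nm_mul]
  have hk1 : nm p ((-1)^k * poch (-1/3) k / k.factorial) ≤ 1 := by
    rw [nm_div, nm_mul]
    have a1 : nm p ((-1)^k) = 1 := by simp [nm]
    have a2 : nm p (poch (-1/3) k) ≤ 1 := nm_prod_le p k _ fun j _ =>
      nm_frac p _ (3*j-1) 3 h3 (by push_cast; ring)
    have a3 : nm p (k.factorial) = 1 := by
      have := nm_unit p (k.factorial) (by
        rw [Int.natCast_dvd_natCast, (Fact.out : p.Prime).dvd_factorial]; omega)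
      simpa using this
    rw [a1, a3]; simpa using a2
  refine (mul_le_of_le_one_left (nm_nonneg p _) hk1).trans ?_
  refine prod_cong p _ (by positivity) k f g ?_ ?_ ?_
  · intro j hj
    exact nm_frac p _ ((3*j-1)^2) _ (hB1 j hj) (by rw [hf]; push_cast; rfl)
  · intro j hj
    exact nm_frac p _ ((3*j-1)^2-p^2) _ (hB2 j hj) (by rw [hg]; push_cast; rfl)
  · intro j hj
    refine nm_frac2 p _ ((3*j-1)^2*(-1) + (3*j+3)^2) ((3*j+3)^2*((3*j+3)^2-p^2))
      (fun h => ((pz p).dvd_or_dvd h).elim (hB1 j hj) (hB2 j hj)) ?_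
    have h1 := hne1 j hj
    have h2 := hne2 j hj
    simp only [hf, hg]; push_cast
    rw [div_sub_div _ _ (pow_ne_zero 2 h1) h2, ← mul_div_assoc]
    congr 1; ring

theorem bound2 (n k : ℕ) (hp : 3 < p) (hodd : Odd p) (hn : p + 1 = 3 * n) (hk : k ≤ n) :
    nm p (p * (poch (-1/3) k ^ 2 * poch (1/2) k / (k.factorial * poch (1/3) k * poch (5/6) k)
      - poch (1/2) k * poch (-1/3+p/3) k * poch (-(n:ℚ)) k /
      (k.factorial * poch (1/3) k * poch (5/6) k))) ≤ (p:ℝ)^(-2:ℤ) := by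
  have hnq : (n:ℚ) = (p+1)/3 := by
    rw [eq_div_iff (by norm_num)]; exact_mod_cast (by omega : n * 3 = p + 1)
  have h3 : ¬ (p:ℤ) ∣ 3 := not_dvd_small p 3 (by norm_num) (by exact_mod_cast hp)
  have h2 : ¬ (p:ℤ) ∣ 2 := not_dvd_small p 2 (by norm_num) (by omega)
  have h6 : ¬ (p:ℤ) ∣ 6 := fun h => ((pz p).dvd_or_dvd (show (p:ℤ) ∣ 2 * 3 from h)).elim h2 h3
  have h9 : ¬ (p:ℤ) ∣ 9 := fun h => ((pz p).dvd_or_dvd (show (p:ℤ) ∣ 3 * 3 from h)).elim h3 h3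
  set f : ℕ → ℚ := fun j => (3*j-1)^2/9 with hf
  set g : ℕ → ℚ := fun j => ((3*j-1)^2-p^2)/9 with hg
  have e1 : ∏ j ∈ range k, f j = poch (-1/3) k ^ 2 := by
    simp only [poch, ← Finset.prod_pow]
    refine Finset.prod_congr rfl fun j hj => ?_
    rw [hf]; ring
  have e2 : ∏ j ∈ range k, g j = poch (-1/3+p/3) k * poch (-(n:ℚ)) k := by
    simp only [poch, ← Finset.prod_mul_distrib]
    refine Finset.prod_congr rfl fun j hj => ?_
    rw [hg, hnq]; ring
  have key : (p * (poch (-1/3) k ^ 2 * poch (1/2) k / (k.factorial * poch (1/3) k * poch (5/6) k)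
      - poch (1/2) k * poch (-1/3+p/3) k * poch (-(n:ℚ)) k /
      (k.factorial * poch (1/3) k * poch (5/6) k)))
      = (poch (1/2) k * p / (k.factorial * poch (1/3) k * poch (5/6) k)) *
        (∏ j ∈ range k, f j - ∏ j ∈ range k, g j) := by
    rw [e1, e2]; ring
  rw [key, nm_mul]
  have hk1 : nm p (poch (1/2) k * p / (k.factorial * poch (1/3) k * poch (5/6) k)) ≤ 1 := by
    rw [nm_div, nm_mul, nm_mul, nm_mul, nm_p]
    have a2 : nm p (poch (1/2) k) ≤ 1 := nm_prod_le p k _ fun j _ =>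
      nm_frac p _ (2*j+1) 2 h2 (by push_cast; ring)
    have a3 : nm p (k.factorial) = 1 := by
      have := nm_unit p (k.factorial) (by
        rw [Int.natCast_dvd_natCast, (Fact.out : p.Prime).dvd_factorial]; omega)
      simpa using this
    have a4 : nm p (poch (1/3) k) = 1 := by
      rw [poch, nm_prod]
      refine Finset.prod_eq_one fun j hj => ?_
      have hj' : j < k := by simpa using hj
      exact nm_frac_unit p _ (3*j+1) 3 h3 (not_dvd_small p _ (by omega) (by omega))
        (by push_cast; ring)
    have ppos : (0:ℝ) < (p:ℝ)⁻¹ := by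
      have : 0 < p := by omega
      positivity
    have ple : (p:ℝ)⁻¹ ≤ 1 := inv_le_one_of_one_le₀ (by exact_mod_cast (by omega : 1 ≤ p))
    have a5 : (p:ℝ)⁻¹ ≤ nm p (poch (5/6) k) := by
      rw [poch, nm_prod]
      have : ∏ j ∈ range k, (if j = (p-5)/6 then (p:ℝ)⁻¹ else 1) ≤
          ∏ j ∈ range k, nm p (5/6 + j) := by
        refine Finset.prod_le_prod (fun j _ => by split_ifs <;> positivity) fun j hj => ?_
        have hj' : j < k := by simpa using hj
        have hx : nm p (5/6+j) = nm p ((6*j+5:ℤ):ℚ) := by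
          rw [show (5/6+j:ℚ) = ((6*j+5:ℤ):ℚ)/((6:ℤ):ℚ) by push_cast; ring, nm_div, nm_unit p 6 h6,
            div_one]
        rw [hx]
        obtain ⟨r, hr⟩ := hodd
        have hm : 6 * ((p-5)/6) + 5 = p := by omega
        split_ifs with hjm
        · have : (6*j+5:ℤ) = p := by omega
          rw [this]
          exact le_of_eq (by simpa using (nm_p p).symm)
        · refine (nm_unit p _ ?_).ge
          rintro ⟨c, hc⟩
          have hc0 : 0 < c := by
            by_contra hcc
            nlinarith
          have hc3 : c < 3 := by
            by_contra hcc
            nlinarith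
          interval_cases c <;> omega
      refine le_trans ?_ this
      rw [Finset.prod_ite_eq']
      split_ifs
      · exact le_rfl
      · exact ple
    rw [a3, a4, one_mul, one_mul]
    refine div_le_one_of_le₀ ?_ (nm_nonneg p _)
    exact (mul_le_of_le_one_left ppos.le a2).trans a5
  refine (mul_le_of_le_one_left (nm_nonneg p _) hk1).trans ?_
  refine prod_cong p _ (by positivity) k f g ?_ ?_ ?_
  · intro j hj
    exact nm_frac p _ ((3*j-1)^2) 9 h9 (by rw [hf]; push_cast; rfl)
  · intro j hj
    exact nm_frac p _ ((3*j-1)^2-p^2) 9 h9 (by rw [hg]; push_cast; rfl)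
  · intro j hj
    refine nm_frac2 p _ 1 9 h9 ?_
    rw [hf, hg]; push_cast; ring

end padic

theorem stmt9 (p : ℕ) [Fact p.Prime] (hodd : Odd p) (hp3 : p % 3 = 2) :
    ‖(((∑ k ∈ Finset.range ((p + 1) / 3 + 1),
          (-1 : ℚ) ^ k * poch (-1/3) k ^ 3 / ((k.factorial : ℚ)) ^ 3) -
        (-(-1 : ℚ) ^ ((p + 1) / 3) * p *
          ∑ k ∈ Finset.range ((p + 1) / 3 + 1),
            poch (-1/3) k ^ 2 * poch (1/2) k /
              ((k.factorial : ℚ) * poch (1/3) k * poch (5/6) k)) : ℚ) : ℚ_[p])‖ ≤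
      (p : ℝ) ^ (-2 : ℤ) := by
  obtain ⟨n, hn⟩ : ∃ n, n = (p+1)/3 := ⟨_, rfl⟩
  rw [← hn]
  have hn' : p + 1 = 3 * n := by omega
  have hp : 3 < p := by
    obtain ⟨r, hr⟩ := hodd
    omega
  have hnq : (n:ℚ) = (p+1)/3 := by
    rw [eq_div_iff (by norm_num)]; exact_mod_cast (by omega : n * 3 = p + 1)
  have hd : ∀ j : ℕ, (1:ℚ) + (-1/3) - (-1/3+p/3) + j ≠ 0 := by
    intro j h
    have h' : (p:ℚ) = 3 * (j+1) := by linarith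
    have : p = 3 * (j+1) := by exact_mod_cast h'
    omega
  have hid := main_id n (-1/3) (-1/3+p/3) (by norm_num) hd
  have hne := poch_ne _ n hd
  set L' := ∑ k ∈ range (n+1), (-1)^k * poch (-1/3) k * poch (-1/3+p/3) k * poch (-(n:ℚ)) k /
      (k.factorial * poch (1+(-1/3)-(-1/3+p/3)) k * poch (1+(-1/3)+n) k) with hL'
  rw [show (1/2 + -1/3/2 : ℚ) = 1/3 by norm_num, show (1 + -1/3/2 : ℚ) = 5/6 by norm_num] at hid
  set R' := ∑ j ∈ range (n+1), poch (1/2) j * poch (-1/3+p/3) j * poch (-(n:ℚ)) j /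
      (j.factorial * poch (1/3) j * poch (5/6) j) with hR'
  have h23 : poch (1 + -1/3) n = -p * poch (-1/3) n := by
    have := poch_succ (-1/3) n
    rw [poch_succ', hnq, show (-1/3+1:ℚ) = 1 + -1/3 by norm_num] at this
    linarith
  have hrf : poch (1+(-1/3)-(-1/3+p/3)) n = (-1)^n * poch (-1/3) n := by
    have := poch_reflect (p/3) n
    rw [show (p/3 - n : ℚ) = -1/3 by rw [hnq]; ring] at this
    rw [← this]; congr 1; ring
  have hsq : ((-1:ℚ)^n) * (-1)^n = 1 := by rw [← mul_pow]; simp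
  have hLR : L' = -(-1)^n * p * R' := by
    apply mul_right_cancel₀ hne
    rw [hid, h23, hrf]
    linear_combination ((p:ℚ) * R' * poch (-1/3) n) * hsq
  set S1 := ∑ k ∈ range (n+1), (-1 : ℚ) ^ k * poch (-1/3) k ^ 3 / ((k.factorial : ℚ)) ^ 3 with hS1
  set S2 := ∑ k ∈ range (n+1), poch (-1/3) k ^ 2 * poch (1/2) k /
              ((k.factorial : ℚ) * poch (1/3) k * poch (5/6) k) with hS2
  change nm p (S1 - (-(-1)^n * p * S2)) ≤ _
  rw [show S1 - (-(-1)^n * p * S2) = (S1 - L') + (-1)^n * (p * (S2 - R')) by rw [hLR]; ring]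
  apply nm_add
  · rw [hS1, hL', ← Finset.sum_sub_distrib]
    refine nm_sum p _ _ _ (by positivity) fun k hk => ?_
    exact bound1 p n k hp hn' (by simpa [Nat.lt_succ_iff] using hk)
  · rw [nm_mul, show nm p ((-1)^n) = 1 by simp [nm], one_mul, hS2, hR', ← Finset.sum_sub_distrib,
      Finset.mul_sum]
    refine nm_sum p _ _ _ (by positivity) fun k hk => ?_
    exact bound2 p n k hp hodd hn' (by simpa [Nat.lt_succ_iff] using hk)
end
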